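/- Let n ≥ 1 and 1 < k < 2. There is a constant C such that for all v ∈ 𝒮(ℝⁿ), ‖⟨ω⟩^{k−1} x v‖_{L²} ≤ C(‖⟨ω⟩^k v‖_{L²} + ‖⟨x⟩^k v‖_{L²}); equivalently, ‖ω^{k−1} x v‖_{L²} ≤ C ‖ω^k v‖_{L²}^{1−1/k} ‖|x|^k v‖_{L²}^{1/k}. In particular Σ^k ⊂ V^k with ‖v;V^k‖ ≤ C‖v;Σ^k‖. -/

import Mathlib

open MeasureTheory Complex
open scoped FourierTransform ENNReal

noncomputable section

abbrev Vn (n : ℕ) := EuclideanSpace ℝ (Fin n)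

/-- `ω^ℓ = (−Δ)^{ℓ/2}` as the Fourier multiplier `|ξ|^ℓ`. -/
def omMul (n : ℕ) (ℓ : ℝ) (f : Vn n → ℂ) : Vn n → ℂ :=
  𝓕⁻ (fun ξ => (((2 * Real.pi * ‖ξ‖) ^ ℓ : ℝ) : ℂ) * 𝓕 f ξ)

/-- `⟨ω⟩^k = (1−Δ)^{k/2}` as a Fourier multiplier. -/
def japMul (n : ℕ) (k : ℝ) (f : Vn n → ℂ) : Vn n → ℂ :=
  𝓕⁻ (fun ξ => (((1 + (2 * Real.pi * ‖ξ‖) ^ 2) ^ (k / 2) : ℝ) : ℂ) * 𝓕 f ξ)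

/-- The `V^k` norm `‖⟨ω⟩^k v‖₂ ∨ ‖⟨ω⟩^{k−1} x v‖₂`. -/
def VkNorm (n : ℕ) (k : ℝ) (f : Vn n → ℂ) : ℝ≥0∞ :=
  eLpNorm (japMul n k f) 2 volume ⊔
    eLpNorm (fun x : Vn n => (WithLp.equiv 2 (Fin n → ℂ)).symm
      (fun j => japMul n (k - 1) (fun y => (y j : ℂ) * f y) x)) 2 volume

/-- The `Σ^k` norm `‖⟨ω⟩^k v‖₂ ∨ ‖⟨x⟩^k v‖₂`. -/
def SigkNorm (n : ℕ) (k : ℝ) (f : Vn n → ℂ) : ℝ≥0∞ :=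
  eLpNorm (japMul n k f) 2 volume ⊔
    eLpNorm (fun x : Vn n => (((1 + ‖x‖ ^ 2) ^ (k / 2) : ℝ) : ℂ) * f x) 2 volume

open scoped SchwartzMap NNReal

/-!
For a direction `e`, Plancherel turns `∫₀^∞ t^{-1-2s} ‖δ_{te} f‖₂² dt`, where
`δ_h f = f(· + h) + f(· - h) - 2f`, into a multiple of `‖|e·ξ|^s 𝓕 f‖₂²`. This is applied with
`s = k - 1` to `f = (a·x) v`, using `δ_h ((a·x) v) = (a·x) δ_h v + (a·h)(v(· + h) - v(· - h))`.
Where `|x| ≤ 2/t` the factor `a·x` costs at most `2/t`, which turns the square function of order `s`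
into that of order `s + 1 = k`, controlled by `ω^k v`. Where `|x| > 2/t` the difference is bounded
termwise by `|x| v` restricted to `|x| > 1/t`, whose integral over `t` is a multiple of
`‖|x|^k v‖₂²`. The remaining multiple of `‖v‖₂²` is absorbed by the uncertainty principle.

Applying the resulting additive estimate to all dilates of `v` and optimising over the scale yields
the multiplicative one. Since `‖x v‖₂ ≤ ‖⟨x⟩^k v‖₂`, the additive estimate for `ω^{k-1}` is also one
for `⟨ω⟩^{k-1}`.
-/

section Plancherel

theorem eLpNorm_two_sq_eq_lintegral {α F : Type*} [MeasurableSpace α] [NormedAddCommGroup F]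
    (μ : Measure α) (f : α → F) : eLpNorm f 2 μ ^ 2 = ∫⁻ x, ‖f x‖ₑ ^ 2 ∂μ := by
  simpa using eLpNorm_nnreal_pow_eq_lintegral (μ := μ) (f := f) (p := 2) (by norm_num)

variable {E F : Type*} [NormedAddCommGroup E] [InnerProductSpace ℝ E] [FiniteDimensional ℝ E]
  [MeasurableSpace E] [BorelSpace E] [NormedAddCommGroup F]

theorem continuous_fourier_of_integrable [NormedSpace ℂ F] {f : E → F} (hf : Integrable f) :
    Continuous (𝓕 f) :=
  VectorFourier.fourierIntegral_continuous Real.continuous_fourierChar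
    (innerSL ℝ).continuous₂ hf

theorem continuous_fourierInv_of_integrable [NormedSpace ℂ F] {f : E → F} (hf : Integrable f) :
    Continuous (𝓕⁻ f) := by
  rw [Real.fourierInv_eq_fourier_comp_neg]
  exact continuous_fourier_of_integrable hf.comp_neg

variable [InnerProductSpace ℂ F] [CompleteSpace F]

theorem fourier_toLp_two_ae_eq {f : E → F} (hf : Integrable f) (hf₂ : MemLp f 2) :
    (𝓕 (hf₂.toLp f) : Lp F 2 (volume : Measure E)) =ᵐ[volume] 𝓕 f := by
  refine ae_eq_of_integral_contDiff_smul_eq ((Lp.memLp _).locallyIntegrable (by norm_num))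
    (continuous_fourier_of_integrable hf).locallyIntegrable fun g g_smooth g_supp => ?_
  have supp_ofReal : HasCompactSupport (Complex.ofRealCLM ∘ g) := g_supp.comp_left rfl
  have smooth_ofReal : ContDiff ℝ (⊤ : ℕ∞) (Complex.ofRealCLM ∘ g) := by fun_prop
  let φ : 𝓢(E, ℂ) := supp_ofReal.toSchwartzMap smooth_ofReal
  have pairing := congrArg (fun T => T φ) (Lp.fourier_toTemperedDistribution_eq (hf₂.toLp f))
  simp only [TemperedDistribution.fourier_apply, Lp.toTemperedDistribution_apply] at pairing
  calc ∫ x, g x • (𝓕 (hf₂.toLp f) : Lp F 2 (volume : Measure E)) x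
      = ∫ x, φ x • (𝓕 (hf₂.toLp f) : Lp F 2 (volume : Measure E)) x := by congr 1
    _ = ∫ x, 𝓕 φ x • hf₂.toLp f x := pairing.symm
    _ = ∫ x, 𝓕 φ x • f x := by
        refine integral_congr_ae ?_
        filter_upwards [hf₂.coeFn_toLp] with x hx
        rw [hx]
    _ = ∫ x, φ x • 𝓕 f x := by
        have flip := VectorFourier.integral_fourierIntegral_smul_eq_flip (L := innerₗ E)
          Real.continuous_fourierChar continuous_inner (φ.integrable (μ := volume)) hf
        rwa [flip_innerₗ] at flip
    _ = ∫ x, g x • 𝓕 f x := by congr 1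

theorem eLpNorm_two_fourier {f : E → F} (hf : Integrable f) (hf₂ : MemLp f 2) :
    eLpNorm (𝓕 f) 2 volume = eLpNorm f 2 volume := by
  have norm_eq := Lp.norm_fourier_eq (hf₂.toLp f)
  rw [Lp.norm_def, Lp.norm_def, ENNReal.toReal_eq_toReal_iff' (Lp.eLpNorm_ne_top _)
    (Lp.eLpNorm_ne_top _)] at norm_eq
  rw [← eLpNorm_congr_ae (fourier_toLp_two_ae_eq hf hf₂), norm_eq,
    eLpNorm_congr_ae hf₂.coeFn_toLp]

theorem eLpNorm_two_fourierInv {f : E → F} (hf : Integrable f) (hf₂ : MemLp f 2) :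
    eLpNorm (𝓕⁻ f) 2 volume = eLpNorm f 2 volume := by
  have comp_neg : 𝓕⁻ f = 𝓕 f ∘ fun x => -x := funext (Real.fourierInv_eq_fourier_neg f)
  rw [← eLpNorm_two_fourier hf hf₂, comp_neg]
  exact eLpNorm_comp_measurePreserving
    (continuous_fourier_of_integrable hf).aestronglyMeasurable (Measure.measurePreserving_neg _)

end Plancherel

section TemperedWeight

variable {E : Type*} [NormedAddCommGroup E]

/-- A real weight of at most polynomial growth; unlike for `Function.HasTemperateGrowth` only
continuity is required, so that fractional powers of the norm are allowed. -/
structure IsTemperedWeight (m : E → ℝ) : Prop where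
  continuous : Continuous m
  abs_le : ∃ (C : ℝ) (N : ℕ), ∀ x, |m x| ≤ C * (1 + ‖x‖ ^ 2) ^ N

theorem isTemperedWeight_one_add_sq_rpow (c : ℝ) {r : ℝ} (hr : 0 ≤ r) :
    IsTemperedWeight fun x : E => (1 + (c * ‖x‖) ^ 2) ^ r := by
  refine ⟨by fun_prop (disch := intros; positivity), (1 + c ^ 2) ^ ⌈r⌉₊, ⌈r⌉₊, fun x => ?_⟩
  rw [abs_of_nonneg (by positivity), ← mul_pow, ← Real.rpow_natCast _ ⌈r⌉₊]
  calc (1 + (c * ‖x‖) ^ 2) ^ r ≤ (1 + (c * ‖x‖) ^ 2) ^ (⌈r⌉₊ : ℝ) :=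
        Real.rpow_le_rpow_of_exponent_le (by nlinarith [sq_nonneg (c * ‖x‖)]) (Nat.le_ceil r)
    _ ≤ ((1 + c ^ 2) * (1 + ‖x‖ ^ 2)) ^ (⌈r⌉₊ : ℝ) := by
        gcongr
        nlinarith [sq_nonneg c, sq_nonneg ‖x‖]

theorem isTemperedWeight_mul_norm_rpow {c : ℝ} (hc : 0 ≤ c) {r : ℝ} (hr : 0 ≤ r) :
    IsTemperedWeight fun x : E => (c * ‖x‖) ^ r := by
  obtain ⟨C, N, bound⟩ := (isTemperedWeight_one_add_sq_rpow (E := E) c hr).abs_le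
  refine ⟨by fun_prop (disch := exact fun _ => Or.inr hr), C, N, fun x => ?_⟩
  refine (abs_le_abs_of_nonneg (by positivity) ?_).trans (bound x)
  gcongr
  nlinarith [sq_nonneg (c * ‖x‖ - 1)]

variable {m : E → ℝ} [InnerProductSpace ℝ E] [FiniteDimensional ℝ E] [MeasurableSpace E]
  [BorelSpace E]

theorem IsTemperedWeight.memLp_mul (hm : IsTemperedWeight m) (v : 𝓢(E, ℂ)) (p : ℝ≥0∞) :
    MemLp (fun x => (m x : ℂ) * v x) p volume := by
  obtain ⟨C, N, bound⟩ := hm.abs_le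
  have growth : (fun x : E => (1 + ‖x‖ ^ 2) ^ N).HasTemperateGrowth := by
    have := Function.hasTemperateGrowth_norm_sq (H := E)
    fun_prop
  let w : 𝓢(E, ℂ) := SchwartzMap.smulLeftCLM ℂ (fun x : E => (1 + ‖x‖ ^ 2) ^ N) v
  refine (w.memLp p volume).of_le_mul (c := C)
    ((continuous_ofReal.comp hm.continuous).mul v.continuous).aestronglyMeasurable
    (Filter.Eventually.of_forall fun x => ?_)
  rw [SchwartzMap.smulLeftCLM_apply_apply growth, norm_mul, norm_real, Real.norm_eq_abs, norm_smul,
    Real.norm_of_nonneg (by positivity), ← mul_assoc]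
  gcongr
  exact bound x

theorem IsTemperedWeight.integrable_mul (hm : IsTemperedWeight m) (v : 𝓢(E, ℂ)) :
    Integrable fun x => (m x : ℂ) * v x :=
  memLp_one_iff_integrable.mp (hm.memLp_mul v 1)

theorem IsTemperedWeight.continuous_multiplier (hm : IsTemperedWeight m) (v : 𝓢(E, ℂ)) :
    Continuous (𝓕⁻ fun ξ => (m ξ : ℂ) * 𝓕 ⇑v ξ) := by
  rw [← SchwartzMap.fourier_coe]
  exact continuous_fourierInv_of_integrable (hm.integrable_mul _)

theorem eLpNorm_two_ofReal_mul_sq {α : Type*} [MeasurableSpace α] (μ : Measure α) (m : α → ℝ)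
    (f : α → ℂ) : eLpNorm (fun x => (m x : ℂ) * f x) 2 μ ^ 2 =
      ∫⁻ x, ENNReal.ofReal (m x ^ 2) * ‖f x‖ₑ ^ 2 ∂μ := by
  simp_rw [eLpNorm_two_sq_eq_lintegral, enorm_mul, mul_pow, ← ofReal_norm (m _ : ℂ), norm_real,
    ← ENNReal.ofReal_pow (norm_nonneg _), Real.norm_eq_abs, sq_abs]

theorem IsTemperedWeight.eLpNorm_multiplier_sq (hm : IsTemperedWeight m) (v : 𝓢(E, ℂ)) :
    eLpNorm (𝓕⁻ fun ξ => (m ξ : ℂ) * 𝓕 ⇑v ξ) 2 volume ^ 2 =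
      ∫⁻ ξ, ENNReal.ofReal (m ξ ^ 2) * ‖𝓕 ⇑v ξ‖ₑ ^ 2 := by
  rw [← SchwartzMap.fourier_coe,
    eLpNorm_two_fourierInv (hm.integrable_mul _) (hm.memLp_mul _ 2), eLpNorm_two_ofReal_mul_sq]

end TemperedWeight

section Moment

variable {E : Type*} [NormedAddCommGroup E] [MeasureSpace E] {F : Type*} [NormedAddCommGroup F]

/-- The squared `L²` norm of `|x|^ℓ f`. It is applied to functions and to their Fourier transforms
alike, with respect to the frequency variable `ξ`, so that
`‖ω^ℓ v‖₂² = (2π)^{2ℓ} moment ℓ (𝓕 v)`. -/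
def moment (ℓ : ℝ) (f : E → F) : ℝ≥0∞ :=
  ∫⁻ x, ENNReal.ofReal (‖x‖ ^ (2 * ℓ)) * ‖f x‖ₑ ^ 2

theorem moment_zero (f : E → F) : moment 0 f = ∫⁻ x, ‖f x‖ₑ ^ 2 := by
  simp [moment]

theorem eLpNorm_two_sq_eq_moment_zero (f : E → F) : eLpNorm f 2 volume ^ 2 = moment 0 f := by
  rw [moment_zero, eLpNorm_two_sq_eq_lintegral]

theorem eLpNorm_two_norm_rpow_mul_sq (ℓ : ℝ) (f : E → ℂ) :
    eLpNorm (fun x => ((‖x‖ ^ ℓ : ℝ) : ℂ) * f x) 2 volume ^ 2 = moment ℓ f := by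
  simp_rw [eLpNorm_two_ofReal_mul_sq, moment, ← Real.rpow_mul_natCast (norm_nonneg _),
    Nat.cast_ofNat, mul_comm ℓ]

theorem ofReal_rpow_mul_moment {c : ℝ} (hc : 0 ≤ c) (ℓ : ℝ) (f : E → F) :
    ENNReal.ofReal (c ^ (2 * ℓ)) * moment ℓ f =
      ∫⁻ x, ENNReal.ofReal ((c * ‖x‖) ^ (2 * ℓ)) * ‖f x‖ₑ ^ 2 := by
  rw [moment, ← lintegral_const_mul' _ _ ENNReal.ofReal_ne_top]
  simp_rw [Real.mul_rpow hc (norm_nonneg _), ENNReal.ofReal_mul (Real.rpow_nonneg hc _), mul_assoc]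

theorem ofReal_rpow_mul_moment_le {c : ℝ} (hc : 0 ≤ c) {ℓ k : ℝ} (hℓ : 0 ≤ ℓ) (hℓk : ℓ ≤ k)
    (f : E → F) : ENNReal.ofReal (c ^ (2 * ℓ)) * moment ℓ f ≤
      ∫⁻ x, ENNReal.ofReal ((1 + (c * ‖x‖) ^ 2) ^ k) * ‖f x‖ₑ ^ 2 := by
  rw [ofReal_rpow_mul_moment hc]
  gcongr with x
  calc (c * ‖x‖) ^ (2 * ℓ) = ((c * ‖x‖) ^ 2) ^ ℓ := by
        rw [← Real.rpow_natCast_mul (by positivity), Nat.cast_ofNat]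
    _ ≤ (1 + (c * ‖x‖) ^ 2) ^ ℓ := by gcongr; linarith
    _ ≤ (1 + (c * ‖x‖) ^ 2) ^ k :=
        Real.rpow_le_rpow_of_exponent_le (by linarith [sq_nonneg (c * ‖x‖)]) hℓk

theorem lintegral_one_add_sq_rpow_mul_le {c : ℝ} (hc : 0 ≤ c) {s : ℝ} (hs₀ : 0 ≤ s) (hs₁ : s ≤ 1)
    {f : E → F} (hf : AEStronglyMeasurable f) :
    ∫⁻ x, ENNReal.ofReal ((1 + (c * ‖x‖) ^ 2) ^ s) * ‖f x‖ₑ ^ 2 ≤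
      moment 0 f + ENNReal.ofReal (c ^ (2 * s)) * moment s f := by
  rw [ofReal_rpow_mul_moment hc, moment_zero, ← lintegral_add_left' (hf.enorm.pow_const 2)]
  refine lintegral_mono fun x => ?_
  rw [← one_add_mul]
  gcongr
  rw [← ENNReal.ofReal_one, ← ENNReal.ofReal_add zero_le_one (by positivity)]
  refine ENNReal.ofReal_le_ofReal ((Real.rpow_add_le_add_rpow zero_le_one (by positivity)
    hs₀ hs₁).trans_eq ?_)
  rw [Real.one_rpow, ← Real.rpow_natCast_mul (by positivity), Nat.cast_ofNat]

theorem moment_const_smul {𝕜 : Type*} [NormedField 𝕜] [NormedSpace 𝕜 F] (ℓ : ℝ) (c : 𝕜)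
    (f : E → F) : moment ℓ (c • f) = ‖c‖ₑ ^ 2 * moment ℓ f := by
  rw [moment, moment, ← lintegral_const_mul' _ _ (by finiteness)]
  simp_rw [Pi.smul_apply, enorm_smul, mul_pow, mul_left_comm]

end Moment

section SchwartzMoment

variable {E : Type*} [NormedAddCommGroup E] [InnerProductSpace ℝ E] [FiniteDimensional ℝ E]
  [MeasurableSpace E] [BorelSpace E]

theorem moment_ne_top (v : 𝓢(E, ℂ)) {ℓ : ℝ} (hℓ : 0 ≤ ℓ) : moment ℓ v ≠ ⊤ := by
  have memLp := (isTemperedWeight_mul_norm_rpow (E := E) zero_le_one hℓ).memLp_mul v 2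
  simp_rw [one_mul] at memLp
  rw [← eLpNorm_two_norm_rpow_mul_sq]
  exact ENNReal.pow_ne_top memLp.eLpNorm_ne_top

theorem moment_fourier_ne_top (v : 𝓢(E, ℂ)) {ℓ : ℝ} (hℓ : 0 ≤ ℓ) : moment ℓ (𝓕 ⇑v) ≠ ⊤ := by
  rw [← SchwartzMap.fourier_coe]
  exact moment_ne_top _ hℓ

theorem moment_zero_fourier (v : 𝓢(E, ℂ)) : moment 0 (𝓕 ⇑v) = moment 0 v := by
  rw [← eLpNorm_two_sq_eq_moment_zero, ← eLpNorm_two_sq_eq_moment_zero,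
    eLpNorm_two_fourier v.integrable (v.memLp 2 volume)]

end SchwartzMoment

section HomogeneousWeight

theorem lintegral_comp_mul_left_Ioi (f : ℝ → ℝ≥0∞) {a : ℝ} (ha : 0 < a) :
    ∫⁻ t in Set.Ioi 0, f (a * t) = ENNReal.ofReal a⁻¹ * ∫⁻ t in Set.Ioi 0, f t := by
  have preimage : (a * ·) ⁻¹' Set.Ioi (0 : ℝ) = Set.Ioi 0 := by
    ext t; simp [ha]
  have scaled := Real.smul_map_volume_mul_left ha.ne'
  conv_rhs => rw [← scaled]
  rw [Measure.restrict_smul, lintegral_smul_measure, smul_eq_mul, ← mul_assoc,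
    ← ENNReal.ofReal_mul (by positivity), abs_of_pos ha, inv_mul_cancel₀ ha.ne',
    ENNReal.ofReal_one, one_mul,
    (measurableEmbedding_mulLeft₀ ha.ne').restrict_map, preimage,
    (measurableEmbedding_mulLeft₀ ha.ne').lintegral_map]

theorem lintegral_Ioi_rpow_of_lt {p r : ℝ} (hp : p < -1) (hr : 0 < r) :
    ∫⁻ t in Set.Ioi r, ENNReal.ofReal (t ^ p) = ENNReal.ofReal (-r ^ (p + 1) / (p + 1)) := by
  rw [← integral_Ioi_rpow_of_lt hp hr, ofReal_integral_eq_lintegral_ofReal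
    (integrableOn_Ioi_rpow_of_lt hp hr)]
  filter_upwards [ae_restrict_mem measurableSet_Ioi] with t ht
  exact Real.rpow_nonneg (hr.trans ht).le p

theorem lintegral_Ioc_zero_one_rpow_ne_top {p : ℝ} (hp : -1 < p) :
    ∫⁻ t in Set.Ioc (0 : ℝ) 1, ENNReal.ofReal (t ^ p) ≠ ⊤ := by
  have integrable := (intervalIntegrable_iff_integrableOn_Ioc_of_le zero_le_one).mp
    (intervalIntegral.intervalIntegrable_rpow' hp)
  rw [← ofReal_integral_eq_lintegral_ofReal integrable]
  · exact ENNReal.ofReal_ne_top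
  · filter_upwards [ae_restrict_mem measurableSet_Ioc] with t ht
    exact Real.rpow_nonneg ht.1.le p

theorem lintegral_Ioi_rpow_mul_ne_top {p a b : ℝ} {f : ℝ → ℝ} {C : ℝ}
    (hpa : -1 < p + a) (hpb : p + b < -1)
    (f_near : ∀ t ∈ Set.Ioc 0 1, f t ≤ C * t ^ a) (f_far : ∀ t ∈ Set.Ioi 1, f t ≤ C * t ^ b) :
    ∫⁻ t in Set.Ioi 0, ENNReal.ofReal (t ^ p) * ENNReal.ofReal (f t) ≠ ⊤ := by
  have bound {q t : ℝ} (ht : 0 < t) (hf : f t ≤ C * t ^ q) :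
      ENNReal.ofReal (t ^ p) * ENNReal.ofReal (f t) ≤
        ENNReal.ofReal C * ENNReal.ofReal (t ^ (p + q)) := by
    rw [← ENNReal.ofReal_mul (by positivity), ← ENNReal.ofReal_mul' (by positivity),
      Real.rpow_add ht]
    refine ENNReal.ofReal_le_ofReal ?_
    calc t ^ p * f t ≤ t ^ p * (C * t ^ q) := by gcongr
      _ = C * (t ^ p * t ^ q) := by ring
  rw [← Set.Ioc_union_Ioi_eq_Ioi (zero_le_one (α := ℝ))]
  refine ne_top_of_le_ne_top (ENNReal.add_ne_top.mpr ⟨?_, ?_⟩) (lintegral_union_le _ _ _)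
  · refine ne_top_of_le_ne_top (ENNReal.mul_ne_top (ENNReal.ofReal_ne_top (r := C))
      (lintegral_Ioc_zero_one_rpow_ne_top hpa)) ?_
    rw [← lintegral_const_mul' _ _ ENNReal.ofReal_ne_top]
    exact setLIntegral_mono' measurableSet_Ioc fun t ht => bound ht.1 (f_near t ht)
  · refine ne_top_of_le_ne_top (ENNReal.mul_ne_top (ENNReal.ofReal_ne_top (r := C))
      ((lintegral_Ioi_rpow_of_lt hpb one_pos).trans_ne ENNReal.ofReal_ne_top)) ?_
    rw [← lintegral_const_mul' _ _ ENNReal.ofReal_ne_top]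
    exact setLIntegral_mono' measurableSet_Ioi fun t ht =>
      bound (one_pos.trans ht) (f_far t ht)

end HomogeneousWeight

section SecondDifferenceConstant

/-- The constant relating the square function of second differences of order `s` to the symbol
`|ξ|^{2s}`. It is finite for `0 < s < 2`. -/
def secondDiffConst (s : ℝ) : ℝ≥0∞ :=
  ∫⁻ t in Set.Ioi (0 : ℝ), ENNReal.ofReal (t ^ (-1 - 2 * s)) *
    ENNReal.ofReal ((2 - 2 * Real.cos t) ^ 2)

theorem lintegral_two_sub_two_mul_cos_sq {s : ℝ} (hs : 0 < s) (a : ℝ) :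
    ∫⁻ t in Set.Ioi (0 : ℝ), ENNReal.ofReal (t ^ (-1 - 2 * s)) *
        ENNReal.ofReal ((2 - 2 * Real.cos (t * a)) ^ 2) =
      secondDiffConst s * ENNReal.ofReal (|a| ^ (2 * s)) := by
  rcases eq_or_ne a 0 with rfl | ha
  · simp [Real.zero_rpow (by positivity : 2 * s ≠ 0)]
  have ha : 0 < |a| := abs_pos.mpr ha
  have scaling {t : ℝ} (ht : 0 < t) : ENNReal.ofReal (t ^ (-1 - 2 * s)) =
      ENNReal.ofReal (|a| ^ (1 + 2 * s)) * ENNReal.ofReal ((|a| * t) ^ (-1 - 2 * s)) := by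
    rw [← ENNReal.ofReal_mul (by positivity), Real.mul_rpow ha.le ht.le, ← mul_assoc,
      ← Real.rpow_add ha]
    simp
  have cos_abs (t : ℝ) : Real.cos (t * a) = Real.cos (|a| * t) := by
    rcases abs_cases a with ⟨h, -⟩ | ⟨h, -⟩ <;> rw [h] <;> simp [mul_comm]
  rw [setLIntegral_congr_fun measurableSet_Ioi fun t ht => by
    rw [scaling ht, cos_abs, mul_assoc]]
  rw [lintegral_const_mul' _ _ ENNReal.ofReal_ne_top, lintegral_comp_mul_left_Ioi
    (fun u => ENNReal.ofReal (u ^ (-1 - 2 * s)) * ENNReal.ofReal ((2 - 2 * Real.cos u) ^ 2)) ha,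
    ← mul_assoc, ← ENNReal.ofReal_mul (by positivity), mul_comm, Real.rpow_add ha, Real.rpow_one,
    mul_right_comm, mul_inv_cancel₀ ha.ne', one_mul, secondDiffConst]

theorem secondDiffConst_ne_zero (s : ℝ) : secondDiffConst s ≠ 0 := by
  have pos : 0 < ∫⁻ t in Set.Ioo (0 : ℝ) 1, ENNReal.ofReal (t ^ (-1 - 2 * s)) *
      ENNReal.ofReal ((2 - 2 * Real.cos t) ^ 2) := by
    refine setLIntegral_pos_iff (by fun_prop) |>.mpr ?_
    refine lt_of_lt_of_le (b := volume (Set.Ioo (0 : ℝ) 1)) (by simp) (measure_mono ?_)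
    rintro t ⟨ht₀, ht₁⟩
    have cos_lt : Real.cos t < 1 := by
      simpa using Real.cos_lt_cos_of_nonneg_of_le_pi le_rfl (by linarith [Real.pi_gt_three]) ht₀
    have sq_pos : 0 < (2 - 2 * Real.cos t) ^ 2 := pow_pos (by linarith) 2
    refine ⟨?_, ht₀, ht₁⟩
    simp only [Function.mem_support, ne_eq, mul_eq_zero, ENNReal.ofReal_eq_zero, not_or, not_le]
    exact ⟨by positivity, sq_pos⟩
  exact (pos.trans_le (lintegral_mono_set Set.Ioo_subset_Ioi_self)).ne'

theorem secondDiffConst_ne_top {s : ℝ} (hs₀ : 0 < s) (hs₂ : s < 2) : secondDiffConst s ≠ ⊤ := by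
  refine lintegral_Ioi_rpow_mul_ne_top (a := 4) (b := 0) (C := 16) (by linarith) (by linarith)
    (fun t _ => ?_) (fun t _ => ?_)
  · have upper : 2 - 2 * Real.cos t ≤ t ^ 2 := by linarith [Real.one_sub_sq_div_two_le_cos (x := t)]
    have := pow_le_pow_left₀ (by linarith [Real.cos_le_one t]) upper 2
    norm_cast
    nlinarith [pow_nonneg (sq_nonneg t) 2]
  · have := pow_le_pow_left₀ (by linarith [Real.cos_le_one t])
      (by linarith [Real.neg_one_le_cos t] : 2 - 2 * Real.cos t ≤ 4) 2
    norm_num at this ⊢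
    exact this

end SecondDifferenceConstant

section SecondDifference

/-- The symmetric second difference of `f` with step `h`. -/
def secondDiff {E F : Type*} [AddCommGroup E] [AddCommGroup F] (h : E) (f : E → F) (x : E) : F :=
  f (x + h) + f (x - h) - 2 • f x

variable {E : Type*} [NormedAddCommGroup E] [InnerProductSpace ℝ E] [FiniteDimensional ℝ E]
  [MeasurableSpace E] [BorelSpace E]

theorem fourier_comp_add_right {F : Type*} [NormedAddCommGroup F] [NormedSpace ℂ F] (f : E → F)
    (h ξ : E) :
    𝓕 (fun x => f (x + h)) ξ = cexp ((2 * Real.pi * inner ℝ h ξ : ℝ) * I) • 𝓕 f ξ := by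
  have := congrFun (VectorFourier.fourierIntegral_comp_add_right Real.fourierChar volume
    (innerₗ E) f h) ξ
  rwa [Circle.smul_def, Real.fourierChar_apply] at this

theorem fourier_secondDiff {F : Type*} [NormedAddCommGroup F] [NormedSpace ℂ F] {f : E → F}
    (hf : Integrable f) (h ξ : E) :
    𝓕 (secondDiff h f) ξ =
      ((2 * Real.cos (2 * Real.pi * inner ℝ h ξ) - 2 : ℝ) : ℂ) • 𝓕 f ξ := by
  have fourier_add {g₁ g₂ : E → F} (h₁ : Integrable g₁) (h₂ : Integrable g₂) :
      𝓕 (g₁ + g₂) = 𝓕 g₁ + 𝓕 g₂ :=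
    VectorFourier.fourierIntegral_add Real.continuous_fourierChar
      (innerSL ℝ).continuous₂ h₁ h₂
  have fourier_smul (c : ℂ) : 𝓕 (c • f) = c • 𝓕 f :=
    VectorFourier.fourierIntegral_const_smul Real.fourierChar volume (innerₗ E) f c
  have expand : secondDiff h f =
      ((fun x => f (x + h)) + fun x => f (x + -h)) + (-2 : ℂ) • f := by
    ext x
    simp [secondDiff, sub_eq_add_neg, ← ofNat_smul_eq_nsmul ℂ]
  rw [expand, fourier_add ((hf.comp_add_right h).add (hf.comp_add_right (-h))) (hf.smul _),
    fourier_add (hf.comp_add_right h) (hf.comp_add_right (-h)), fourier_smul]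
  simp only [Pi.add_apply, Pi.smul_apply, fourier_comp_add_right, ← add_smul]
  congr 1
  push_cast
  rw [two_cos, inner_neg_left]
  push_cast
  ring_nf

theorem memLp_secondDiff {F : Type*} [NormedAddCommGroup F] {f : E → F} {p : ℝ≥0∞}
    (hf : MemLp f p) (h : E) : MemLp (secondDiff h f) p := by
  have double : MemLp (fun x => 2 • f x) p := by
    simp_rw [two_nsmul]
    exact hf.add hf
  exact ((hf.comp_measurePreserving (measurePreserving_add_right volume h)).add
    (hf.comp_measurePreserving (measurePreserving_sub_right volume h))).sub double

theorem lintegral_mul_lintegral_mul_swap {α β : Type*} [MeasurableSpace α] [MeasurableSpace β]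
    (μ : Measure α) (ν : Measure β) [SFinite μ] [SFinite ν] {φ : α → ℝ≥0∞} {w : α → β → ℝ≥0∞}
    {G : β → ℝ≥0∞} (hφ : Measurable φ) (hw : Measurable (Function.uncurry w))
    (hG : Measurable G) :
    ∫⁻ t, φ t * ∫⁻ x, w t x * G x ∂ν ∂μ = ∫⁻ x, (∫⁻ t, φ t * w t x ∂μ) * G x ∂ν := by
  calc ∫⁻ t, φ t * ∫⁻ x, w t x * G x ∂ν ∂μ
      = ∫⁻ t, ∫⁻ x, φ t * (w t x * G x) ∂ν ∂μ := by
        congr with t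
        exact (lintegral_const_mul _ (hw.of_uncurry_left.mul hG)).symm
    _ = ∫⁻ x, ∫⁻ t, φ t * (w t x * G x) ∂μ ∂ν :=
        lintegral_lintegral_swap ((hφ.comp measurable_fst).mul
          (hw.mul (hG.comp measurable_snd))).aemeasurable
    _ = ∫⁻ x, (∫⁻ t, φ t * w t x ∂μ) * G x ∂ν := by
        congr with x
        rw [← lintegral_mul_const _ (hφ.fun_mul hw.of_uncurry_right)]
        simp_rw [mul_assoc]

variable {F : Type*} [NormedAddCommGroup F] [InnerProductSpace ℂ F] [CompleteSpace F] {f : E → F}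

theorem eLpNorm_two_secondDiff_sq (hf : Integrable f) (hf₂ : MemLp f 2) (h : E) :
    eLpNorm (secondDiff h f) 2 volume ^ 2 =
      ∫⁻ ξ, ENNReal.ofReal ((2 - 2 * Real.cos (2 * Real.pi * inner ℝ h ξ)) ^ 2) *
        ‖𝓕 f ξ‖ₑ ^ 2 := by
  have integrable := memLp_one_iff_integrable.mp
    (memLp_secondDiff (memLp_one_iff_integrable.mpr hf) h)
  rw [← eLpNorm_two_fourier integrable (memLp_secondDiff hf₂ h), eLpNorm_two_sq_eq_lintegral]
  congr with ξ
  rw [fourier_secondDiff hf, enorm_smul, mul_pow, ← ofReal_norm, norm_real,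
    ← ENNReal.ofReal_pow (norm_nonneg _), Real.norm_eq_abs, sq_abs, ← neg_sq, neg_sub]

theorem lintegral_eLpNorm_secondDiff_sq (hf : Integrable f) (hf₂ : MemLp f 2) {s : ℝ} (hs : 0 < s)
    (e : E) :
    ∫⁻ t in Set.Ioi (0 : ℝ),
        ENNReal.ofReal (t ^ (-1 - 2 * s)) * eLpNorm (secondDiff (t • e) f) 2 volume ^ 2 =
      secondDiffConst s *
        ∫⁻ ξ, ENNReal.ofReal (|2 * Real.pi * inner ℝ e ξ| ^ (2 * s)) * ‖𝓕 f ξ‖ₑ ^ 2 := by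
  have fourier_meas : Measurable fun ξ => ‖𝓕 f ξ‖ₑ ^ 2 :=
    (continuous_fourier_of_integrable hf).enorm.measurable.pow_const 2
  simp_rw [eLpNorm_two_secondDiff_sq hf hf₂, inner_smul_left, RCLike.conj_to_real,
    mul_left_comm (2 * Real.pi)]
  rw [lintegral_mul_lintegral_mul_swap _ _ (by fun_prop) (by fun_prop) fourier_meas,
    ← lintegral_const_mul _ (by fun_prop)]
  simp_rw [lintegral_two_sub_two_mul_cos_sq hs, mul_assoc]

end SecondDifference

section Translation

theorem norm_secondDiff_le {E F : Type*} [AddCommGroup E] [NormedAddCommGroup F]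
    (f : E → F) (h x : E) :
    ‖secondDiff h f x‖ ≤ ‖f (x + h)‖ + ‖f (x - h)‖ + 2 * ‖f x‖ :=
  (norm_sub_le _ _).trans (add_le_add (norm_add_le _ _) (norm_nsmul_le.trans_eq (by simp)))

theorem eLpNorm_add_const_smul_le {α : Type*} [MeasurableSpace α] {μ : Measure α} {p : ℝ≥0∞}
    [Fact (1 ≤ p)] {u g : α → ℝ} (hu : AEStronglyMeasurable u μ) (hg : AEStronglyMeasurable g μ)
    {c : ℝ} (hc : 0 ≤ c) :
    eLpNorm (u + c • g) p μ ≤ eLpNorm u p μ + ENNReal.ofReal c * eLpNorm g p μ := by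
  refine (eLpNorm_add_le hu (hg.const_smul c) Fact.out).trans_eq ?_
  rw [eLpNorm_const_smul, Real.enorm_of_nonneg hc]

variable {E F : Type*} [NormedAddCommGroup E] [NormedAddCommGroup F] [MeasurableSpace E]
  [BorelSpace E] {μ : Measure E} [μ.IsAddRightInvariant] {f : E → F} {p : ℝ≥0∞} [Fact (1 ≤ p)]

theorem eLpNorm_norm_add_add_norm_sub_le (hf : AEStronglyMeasurable f μ) (h : E) :
    eLpNorm (fun x => ‖f (x + h)‖ + ‖f (x - h)‖) p μ ≤ 2 * eLpNorm f p μ := by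
  have plus := measurePreserving_add_right μ h
  have minus := measurePreserving_sub_right μ h
  refine (eLpNorm_add_le (hf.comp_measurePreserving plus).norm
    (hf.comp_measurePreserving minus).norm Fact.out).trans_eq ?_
  rw [eLpNorm_norm, eLpNorm_norm, eLpNorm_comp_measurePreserving hf plus,
    eLpNorm_comp_measurePreserving hf minus, two_mul]

theorem aestronglyMeasurable_norm_add_add_norm_sub (hf : AEStronglyMeasurable f μ) (h : E) :
    AEStronglyMeasurable (fun x => ‖f (x + h)‖ + ‖f (x - h)‖) μ :=
  (hf.comp_measurePreserving (measurePreserving_add_right μ h)).norm.add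
    (hf.comp_measurePreserving (measurePreserving_sub_right μ h)).norm

theorem aestronglyMeasurable_secondDiff (hf : AEStronglyMeasurable f μ) (h : E) :
    AEStronglyMeasurable (secondDiff h f) μ :=
  ((hf.comp_measurePreserving (measurePreserving_add_right μ h)).add
    (hf.comp_measurePreserving (measurePreserving_sub_right μ h))).sub (hf.const_smul 2)

theorem eLpNorm_secondDiff_le (hf : AEStronglyMeasurable f μ) (h : E) :
    eLpNorm (secondDiff h f) p μ ≤ 4 * eLpNorm f p μ := by
  calc eLpNorm (secondDiff h f) p μ
      ≤ eLpNorm ((fun x => ‖f (x + h)‖ + ‖f (x - h)‖) + (2 : ℝ) • fun x => ‖f x‖) p μ :=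
        eLpNorm_mono_real (norm_secondDiff_le f h)
    _ ≤ 2 * eLpNorm f p μ + ENNReal.ofReal 2 * eLpNorm f p μ := by
        grw [eLpNorm_add_const_smul_le (aestronglyMeasurable_norm_add_add_norm_sub hf h) hf.norm
          zero_le_two, eLpNorm_norm_add_add_norm_sub_le hf h, eLpNorm_norm]
    _ = 4 * eLpNorm f p μ := by
        rw [ENNReal.ofReal_ofNat]
        ring

end Translation

section FarPart

variable {E F : Type*} [NormedAddCommGroup E] [NormedAddCommGroup F] [NormedSpace ℝ F]

/-- The part of `|x| f` supported in `|x| > 1/t`: where the weight `x` is too large to be absorbed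
into a difference quotient of step `t`. -/
def farPart (t : ℝ) (f : E → F) : E → F :=
  {y | 1 < t * ‖y‖}.indicator fun y => ‖y‖ • f y

theorem norm_farPart_of_lt {t : ℝ} (f : E → F) {y : E} (hy : 1 < t * ‖y‖) :
    ‖farPart t f y‖ = ‖y‖ * ‖f y‖ := by
  rw [farPart, Set.indicator_of_mem (s := {y | 1 < t * ‖y‖}) hy, norm_smul, norm_norm]

theorem mul_norm_secondDiff_le {t : ℝ} (ht₀ : 0 < t) (ht₁ : t ≤ 1) (f : E → F) {h : E}
    (hh : ‖h‖ ≤ t) (x : E) :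
    ‖x‖ * ‖secondDiff h f x‖ ≤ 2 / t * ‖secondDiff h f x‖ +
      2 * (‖farPart t f (x + h)‖ + ‖farPart t f (x - h)‖ + ‖farPart t f x‖) := by
  rcases le_or_gt ‖x‖ (2 / t) with near | far
  · have : ‖x‖ * ‖secondDiff h f x‖ ≤ 2 / t * ‖secondDiff h f x‖ := by gcongr
    linarith [norm_nonneg (farPart t f (x + h)), norm_nonneg (farPart t f (x - h)),
      norm_nonneg (farPart t f x)]
  have two_lt : 2 < t * ‖x‖ := by rwa [div_lt_iff₀' ht₀] at far
  have farPart_ge {y : E} (hy : ‖x‖ - t ≤ ‖y‖) : ‖x‖ * ‖f y‖ ≤ 2 * ‖farPart t f y‖ := by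
    have half : ‖x‖ ≤ 2 * ‖y‖ := by nlinarith
    rw [norm_farPart_of_lt f (by nlinarith), ← mul_assoc]
    gcongr
  have plus := farPart_ge (y := x + h) (by linarith [norm_sub_le_norm_add x h])
  have minus := farPart_ge (y := x - h) (by linarith [norm_sub_norm_le x h])
  have center := norm_farPart_of_lt (t := t) f (y := x) (by linarith)
  calc ‖x‖ * ‖secondDiff h f x‖ ≤ ‖x‖ * (‖f (x + h)‖ + ‖f (x - h)‖ + 2 * ‖f x‖) := by
        gcongr
        exact norm_secondDiff_le f h x
    _ = ‖x‖ * ‖f (x + h)‖ + ‖x‖ * ‖f (x - h)‖ + 2 * (‖x‖ * ‖f x‖) := by ring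
    _ ≤ 2 * (‖farPart t f (x + h)‖ + ‖farPart t f (x - h)‖ + ‖farPart t f x‖) := by linarith
    _ ≤ _ := le_add_of_nonneg_left (by positivity)

theorem aestronglyMeasurable_farPart [MeasurableSpace E] [BorelSpace E] {μ : Measure E}
    {f : E → F} (hf : AEStronglyMeasurable f μ) (t : ℝ) :
    AEStronglyMeasurable (farPart t f) μ :=
  (continuous_norm.aestronglyMeasurable.smul hf).indicator
    (measurableSet_lt measurable_const (by fun_prop))

end FarPart

section Commutator

variable {E F : Type*} [NormedAddCommGroup E] [InnerProductSpace ℝ E] [NormedAddCommGroup F]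
  [NormedSpace ℝ F]

theorem secondDiff_inner_smul (a h : E) (f : E → F) (x : E) :
    secondDiff h (fun y => inner ℝ a y • f y) x =
      inner ℝ a x • secondDiff h f x + inner ℝ a h • (f (x + h) - f (x - h)) := by
  simp only [secondDiff, inner_add_right, inner_sub_right, two_nsmul]
  module

theorem norm_secondDiff_inner_smul_le {t : ℝ} (ht₀ : 0 < t) (ht₁ : t ≤ 1) {a h : E}
    (ha : ‖a‖ ≤ 1) (hh : ‖h‖ ≤ t) (f : E → F) (x : E) :
    ‖secondDiff h (fun y => inner ℝ a y • f y) x‖ ≤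
      2 / t * ‖secondDiff h f x‖ + 2 * (‖farPart t f (x + h)‖ + ‖farPart t f (x - h)‖) +
        2 * ‖farPart t f x‖ + t * (‖f (x + h)‖ + ‖f (x - h)‖) := by
  have abs_inner_le (y : E) : ‖inner ℝ a y‖ ≤ ‖y‖ :=
    (norm_inner_le_norm a y).trans (mul_le_of_le_one_left (norm_nonneg y) ha)
  have main : ‖inner ℝ a x • secondDiff h f x‖ ≤ ‖x‖ * ‖secondDiff h f x‖ := by
    rw [norm_smul]
    gcongr
    exact abs_inner_le x
  have error : ‖inner ℝ a h • (f (x + h) - f (x - h))‖ ≤ t * (‖f (x + h)‖ + ‖f (x - h)‖) := by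
    rw [norm_smul]
    gcongr
    · exact (abs_inner_le h).trans hh
    · exact norm_sub_le _ _
  rw [secondDiff_inner_smul]
  linarith [norm_add_le (inner ℝ a x • secondDiff h f x) (inner ℝ a h • (f (x + h) - f (x - h))),
    mul_norm_secondDiff_le ht₀ ht₁ f hh x]

theorem norm_inner_smul_le_farPart {t : ℝ} (ht : 0 < t) {a : E} (ha : ‖a‖ ≤ 1) (f : E → F)
    (x : E) : ‖inner ℝ a x • f x‖ ≤ ‖farPart t f x‖ + t⁻¹ * ‖f x‖ := by
  have inner_smul_le : ‖inner ℝ a x • f x‖ ≤ ‖x‖ * ‖f x‖ := by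
    rw [norm_smul]
    gcongr
    exact (norm_inner_le_norm a x).trans (mul_le_of_le_one_left (norm_nonneg x) ha)
  rcases lt_or_ge 1 (t * ‖x‖) with far | near
  · rw [norm_farPart_of_lt f far]
    exact inner_smul_le.trans (le_add_of_nonneg_right (by positivity))
  · have : ‖x‖ ≤ t⁻¹ := by rwa [← one_div, le_div_iff₀' ht]
    calc ‖inner ℝ a x • f x‖ ≤ t⁻¹ * ‖f x‖ := inner_smul_le.trans (by gcongr)
      _ ≤ _ := le_add_of_nonneg_left (norm_nonneg _)

variable [MeasurableSpace E] [BorelSpace E] {μ : Measure E} [μ.IsAddRightInvariant] {f : E → F}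
  {p : ℝ≥0∞} [Fact (1 ≤ p)]

theorem eLpNorm_secondDiff_inner_smul_le_of_le_one (hf : AEStronglyMeasurable f μ) {t : ℝ}
    (ht₀ : 0 < t) (ht₁ : t ≤ 1) {a h : E} (ha : ‖a‖ ≤ 1) (hh : ‖h‖ ≤ t) :
    eLpNorm (secondDiff h fun x => inner ℝ a x • f x) p μ ≤
      ENNReal.ofReal (2 / t) * eLpNorm (secondDiff h f) p μ + 6 * eLpNorm (farPart t f) p μ +
        ENNReal.ofReal (2 * t) * eLpNorm f p μ := by
  have far_meas := aestronglyMeasurable_farPart hf t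
  let D : E → ℝ := fun x => ‖secondDiff h f x‖
  let T : E → ℝ := fun x => ‖farPart t f (x + h)‖ + ‖farPart t f (x - h)‖
  let T₀ : E → ℝ := fun x => ‖farPart t f x‖
  let S : E → ℝ := fun x => ‖f (x + h)‖ + ‖f (x - h)‖
  have D_meas : AEStronglyMeasurable D μ := (aestronglyMeasurable_secondDiff hf h).norm
  have T_meas : AEStronglyMeasurable T μ := aestronglyMeasurable_norm_add_add_norm_sub far_meas h
  have S_meas : AEStronglyMeasurable S μ := aestronglyMeasurable_norm_add_add_norm_sub hf h
  calc eLpNorm (secondDiff h fun x => inner ℝ a x • f x) p μ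
      ≤ eLpNorm ((2 / t) • D + (2 : ℝ) • T + (2 : ℝ) • T₀ + t • S) p μ :=
        eLpNorm_mono_real (norm_secondDiff_inner_smul_le ht₀ ht₁ ha hh f)
    _ ≤ ENNReal.ofReal (2 / t) * eLpNorm (secondDiff h f) p μ +
          ENNReal.ofReal 2 * (2 * eLpNorm (farPart t f) p μ) +
          ENNReal.ofReal 2 * eLpNorm (farPart t f) p μ +
          ENNReal.ofReal t * (2 * eLpNorm f p μ) := by
        grw [eLpNorm_add_const_smul_le (((D_meas.const_smul _).add (T_meas.const_smul _)).add
            (far_meas.norm.const_smul _)) S_meas ht₀.le,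
          eLpNorm_add_const_smul_le ((D_meas.const_smul _).add (T_meas.const_smul _))
            far_meas.norm zero_le_two,
          eLpNorm_add_const_smul_le (D_meas.const_smul _) T_meas zero_le_two,
          eLpNorm_norm_add_add_norm_sub_le far_meas h, eLpNorm_norm_add_add_norm_sub_le hf h,
          eLpNorm_const_smul, Real.enorm_of_nonneg (by positivity), eLpNorm_norm, eLpNorm_norm]
    _ = _ := by
        rw [ENNReal.ofReal_mul zero_le_two, ENNReal.ofReal_ofNat]
        ring

theorem eLpNorm_secondDiff_inner_smul_le_of_pos (hf : AEStronglyMeasurable f μ) {t : ℝ}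
    (ht : 0 < t) {a : E} (ha : ‖a‖ ≤ 1) (h : E) :
    eLpNorm (secondDiff h fun x => inner ℝ a x • f x) p μ ≤
      4 * eLpNorm (farPart t f) p μ + ENNReal.ofReal (4 * t⁻¹) * eLpNorm f p μ := by
  have inner_meas : AEStronglyMeasurable (fun x => inner ℝ a x • f x) μ :=
    (by fun_prop : Continuous fun x => inner ℝ a x).aestronglyMeasurable.smul hf
  calc eLpNorm (secondDiff h fun x => inner ℝ a x • f x) p μ
      ≤ 4 * eLpNorm ((fun x => ‖farPart t f x‖) + t⁻¹ • fun x => ‖f x‖) p μ := by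
        grw [eLpNorm_secondDiff_le inner_meas h]
        gcongr
        exact eLpNorm_mono_real (norm_inner_smul_le_farPart ht ha f)
    _ ≤ 4 * (eLpNorm (farPart t f) p μ + ENNReal.ofReal t⁻¹ * eLpNorm f p μ) := by
        grw [eLpNorm_add_const_smul_le (aestronglyMeasurable_farPart hf t).norm hf.norm
          (by positivity), eLpNorm_norm, eLpNorm_norm]
    _ = _ := by
        rw [ENNReal.ofReal_mul zero_le_four, ENNReal.ofReal_ofNat]
        ring

theorem eLpNorm_secondDiff_inner_smul_le (hf : AEStronglyMeasurable f μ) {t : ℝ} (ht : 0 < t)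
    {a h : E} (ha : ‖a‖ ≤ 1) (hh : ‖h‖ ≤ t) :
    eLpNorm (secondDiff h fun x => inner ℝ a x • f x) p μ ≤
      ENNReal.ofReal (2 / t) * eLpNorm (secondDiff h f) p μ + 6 * eLpNorm (farPart t f) p μ +
        ENNReal.ofReal (4 * min t t⁻¹) * eLpNorm f p μ := by
  rcases le_total t 1 with ht₁ | ht₁
  · refine (eLpNorm_secondDiff_inner_smul_le_of_le_one hf ht ht₁ ha hh).trans ?_
    rw [min_eq_left (ht₁.trans (one_le_inv_iff₀.mpr ⟨ht, ht₁⟩))]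
    gcongr
    linarith
  · refine (eLpNorm_secondDiff_inner_smul_le_of_pos hf ht ha h).trans ?_
    rw [min_eq_right ((inv_le_one_of_one_le₀ ht₁).trans ht₁)]
    gcongr
    exact le_add_left (by gcongr; norm_num)

end Commutator

section FarPartSquareFunction

theorem lintegral_Ioi_rpow_mul_indicator {s : ℝ} (hs : 0 < s) {r : ℝ} (hr : 0 ≤ r) :
    ∫⁻ t in Set.Ioi (0 : ℝ), ENNReal.ofReal (t ^ (-1 - 2 * s)) *
        (Set.Ioi 1).indicator 1 (t * r) =
      ENNReal.ofReal (2 * s)⁻¹ * ENNReal.ofReal (r ^ (2 * s)) := by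
  rcases hr.eq_or_lt with rfl | hr
  · simp [Real.zero_rpow (by positivity : 2 * s ≠ 0)]
  have restrict : ∀ t : ℝ, ENNReal.ofReal (t ^ (-1 - 2 * s)) * (Set.Ioi 1).indicator 1 (t * r) =
      (Set.Ioi r⁻¹).indicator (fun t => ENNReal.ofReal (t ^ (-1 - 2 * s))) t := by
    intro t
    simp only [Set.indicator_apply, Set.mem_Ioi, Pi.one_apply, inv_lt_iff_one_lt_mul₀ hr]
    split_ifs <;> simp
  simp_rw [restrict]
  rw [setLIntegral_indicator measurableSet_Ioi, Set.Ioi_inter_Ioi, sup_eq_left.mpr (by positivity),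
    lintegral_Ioi_rpow_of_lt (by linarith) (by positivity),
    ← ENNReal.ofReal_mul (by positivity), Real.inv_rpow hr.le, ← Real.rpow_neg hr.le]
  congr 1
  ring_nf

variable {E F : Type*} [NormedAddCommGroup E] [MeasureSpace E]
  [NormedAddCommGroup F] [NormedSpace ℝ F]

theorem eLpNorm_two_farPart_sq (t : ℝ) (f : E → F) : eLpNorm (farPart t f) 2 volume ^ 2 =
    ∫⁻ x, (Set.Ioi 1).indicator 1 (t * ‖x‖) * (ENNReal.ofReal (‖x‖ ^ 2) * ‖f x‖ₑ ^ 2) := by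
  rw [eLpNorm_two_sq_eq_lintegral]
  congr with x
  by_cases hx : 1 < t * ‖x‖ <;> simp [farPart, hx, enorm_smul, mul_pow, ENNReal.ofReal_pow]

variable [OpensMeasurableSpace E] [SFinite (volume : Measure E)] {f : E → F}

theorem measurable_eLpNorm_two_farPart_sq (hf : Measurable fun x => ‖f x‖ₑ) :
    Measurable fun t => eLpNorm (farPart t f) 2 volume ^ 2 := by
  simp_rw [eLpNorm_two_farPart_sq]
  refine Measurable.lintegral_prod_right' (f := fun p : ℝ × E => (Set.Ioi 1).indicator 1
    (p.1 * ‖p.2‖) * (ENNReal.ofReal (‖p.2‖ ^ 2) * ‖f p.2‖ₑ ^ 2)) ?_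
  have measurable_cutoff : Measurable ((Set.Ioi (1 : ℝ)).indicator (1 : ℝ → ℝ≥0∞)) :=
    measurable_one.indicator measurableSet_Ioi
  exact (measurable_cutoff.comp (by fun_prop)).mul
    (.mul (by fun_prop) ((hf.comp measurable_snd).pow_const 2))

theorem lintegral_eLpNorm_farPart_sq {s : ℝ} (hs : 0 < s) (hf : Measurable fun x => ‖f x‖ₑ) :
    ∫⁻ t in Set.Ioi (0 : ℝ),
        ENNReal.ofReal (t ^ (-1 - 2 * s)) * eLpNorm (farPart t f) 2 volume ^ 2 =
      ENNReal.ofReal (2 * s)⁻¹ * moment (s + 1) f := by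
  simp_rw [eLpNorm_two_farPart_sq]
  rw [lintegral_mul_lintegral_mul_swap _ _ (by fun_prop)
    (by fun_prop (disch := exact measurableSet_Ioi)) (by fun_prop), moment,
    ← lintegral_const_mul' _ _ ENNReal.ofReal_ne_top]
  congr with x
  rw [lintegral_Ioi_rpow_mul_indicator hs (norm_nonneg x), mul_assoc, ← mul_assoc _ _ (‖f x‖ₑ ^ 2),
    ← ENNReal.ofReal_mul (by positivity), mul_add, mul_one,
    Real.rpow_add_of_nonneg (norm_nonneg x) (by positivity) zero_le_two, Real.rpow_two]

end FarPartSquareFunction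

section DirectionalEstimate

variable {E : Type*} [NormedAddCommGroup E] [InnerProductSpace ℝ E]

/-- Multiplication of a Schwartz function by the linear form `⟪a, ·⟫`. -/
def innerMul (a : E) (v : 𝓢(E, ℂ)) : 𝓢(E, ℂ) :=
  SchwartzMap.smulLeftCLM ℂ (fun x => inner ℝ a x) v

theorem innerMul_apply (a : E) (v : 𝓢(E, ℂ)) (x : E) : innerMul a v x = inner ℝ a x • v x :=
  SchwartzMap.smulLeftCLM_apply_apply (by fun_prop) v x

theorem add_add_sq_le (a b c : ℝ≥0∞) : (a + b + c) ^ 2 ≤ 3 * (a ^ 2 + b ^ 2 + c ^ 2) := by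
  have := ENNReal.rpow_sum_le_const_mul_sum_rpow Finset.univ ![a, b, c] one_le_two
  norm_num [Fin.sum_univ_three] at this
  exact this

/-- The constant collecting the lower-order error of the commutator estimate over all steps `t`.
It is finite for `0 < s < 1`. -/
def lowerOrderConst (s : ℝ) : ℝ≥0∞ :=
  ∫⁻ t in Set.Ioi (0 : ℝ), ENNReal.ofReal (t ^ (-1 - 2 * s)) * ENNReal.ofReal (min t t⁻¹ ^ 2)

theorem lowerOrderConst_ne_top {s : ℝ} (hs₀ : 0 < s) (hs₁ : s < 1) : lowerOrderConst s ≠ ⊤ := by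
  refine lintegral_Ioi_rpow_mul_ne_top (a := 2) (b := 0) (C := 1) (by linarith) (by linarith)
    (fun t ht => ?_) (fun t ht => ?_)
  · rw [one_mul, Real.rpow_two]
    have := ht.1
    gcongr
    exact min_le_left _ _
  · have ht : 1 < t := ht
    rw [Real.rpow_zero, mul_one]
    exact pow_le_one₀ (by positivity) ((min_le_right _ _).trans (inv_le_one_of_one_le₀ ht.le))

variable [FiniteDimensional ℝ E] [MeasurableSpace E] [BorelSpace E]

theorem eLpNorm_two_secondDiff_innerMul_sq_le {t : ℝ} (ht : 0 < t) {a e : E} (ha : ‖a‖ ≤ 1)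
    (he : ‖e‖ ≤ 1) (v : 𝓢(E, ℂ)) :
    eLpNorm (secondDiff (t • e) (innerMul a v)) 2 volume ^ 2 ≤
      12 * (ENNReal.ofReal (t ^ (-2 : ℝ)) * eLpNorm (secondDiff (t • e) v) 2 volume ^ 2) +
        108 * eLpNorm (farPart t v) 2 volume ^ 2 +
        48 * (ENNReal.ofReal (min t t⁻¹ ^ 2) * moment 0 v) := by
  have step_le : ‖t • e‖ ≤ t := by
    rw [norm_smul, Real.norm_of_nonneg ht.le]
    exact mul_le_of_le_one_right ht.le he
  have bound := eLpNorm_secondDiff_inner_smul_le (p := 2) v.continuous.aestronglyMeasurable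
    (μ := volume) ht ha step_le
  rw [funext (innerMul_apply a v)]
  grw [bound, add_add_sq_le]
  have sq_ofReal_two_div : ENNReal.ofReal (2 / t) ^ 2 = 4 * ENNReal.ofReal (t ^ (-2 : ℝ)) := by
    rw [← ENNReal.ofReal_pow (by positivity), div_pow, div_eq_mul_inv, Real.rpow_neg ht.le,
      Real.rpow_two, ENNReal.ofReal_mul (by norm_num)]
    norm_num
  have sq_ofReal_four_mul_min :
      ENNReal.ofReal (4 * min t t⁻¹) ^ 2 = 16 * ENNReal.ofReal (min t t⁻¹ ^ 2) := by
    rw [← ENNReal.ofReal_pow (by positivity), mul_pow, ENNReal.ofReal_mul (by norm_num)]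
    norm_num
  rw [mul_pow, mul_pow, mul_pow, eLpNorm_two_sq_eq_moment_zero v, sq_ofReal_two_div,
    sq_ofReal_four_mul_min]
  exact le_of_eq (by ring)

end DirectionalEstimate

section FrequencyMoment

variable {E : Type*} [NormedAddCommGroup E] [InnerProductSpace ℝ E]

theorem ofReal_norm_rpow_le_sum {ι : Type*} [Fintype ι] (b : OrthonormalBasis ι ℝ E) {s : ℝ}
    (hs₀ : 0 < s) (hs₁ : s ≤ 1) (ξ : E) :
    ENNReal.ofReal (‖ξ‖ ^ (2 * s)) ≤ ∑ i, ENNReal.ofReal (|inner ℝ (b i) ξ| ^ (2 * s)) := by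
  have rpow_two_mul (r : ℝ) (hr : 0 ≤ r) :
      ENNReal.ofReal (r ^ (2 * s)) = ENNReal.ofReal (r ^ 2) ^ s := by
    rw [ENNReal.ofReal_rpow_of_nonneg (by positivity) hs₀.le, ← Real.rpow_natCast_mul hr,
      Nat.cast_ofNat]
  simp_rw [rpow_two_mul _ (abs_nonneg _), rpow_two_mul _ (norm_nonneg _), sq_abs,
    ← b.sum_sq_norm_inner_right ξ, Real.norm_eq_abs, sq_abs]
  rw [ENNReal.ofReal_sum_of_nonneg fun i _ => sq_nonneg _]
  exact Finset.le_sum_of_subadditive (· ^ s) (ENNReal.zero_rpow_of_pos hs₀).le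
    (fun x y => ENNReal.rpow_add_le_add_rpow x y hs₀.le hs₁) _ _

variable [FiniteDimensional ℝ E] [MeasurableSpace E] [BorelSpace E]

theorem secondDiffConst_mul_lintegral_fourier_innerMul_le {s : ℝ} (hs : 0 < s) {a e : E}
    (ha : ‖a‖ ≤ 1) (he : ‖e‖ ≤ 1) (v : 𝓢(E, ℂ)) :
    secondDiffConst s * ∫⁻ ξ, ENNReal.ofReal (|2 * Real.pi * inner ℝ e ξ| ^ (2 * s)) *
        ‖𝓕 ⇑(innerMul a v) ξ‖ₑ ^ 2 ≤
      12 * (secondDiffConst (s + 1) *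
          ∫⁻ ξ, ENNReal.ofReal (|2 * Real.pi * inner ℝ e ξ| ^ (2 * (s + 1))) * ‖𝓕 ⇑v ξ‖ₑ ^ 2) +
        108 * (ENNReal.ofReal (2 * s)⁻¹ * moment (s + 1) v) +
        48 * (lowerOrderConst s * moment 0 v) := by
  have weight_mul : ∀ t ∈ Set.Ioi (0 : ℝ), ENNReal.ofReal (t ^ (-1 - 2 * s)) *
      eLpNorm (secondDiff (t • e) (innerMul a v)) 2 volume ^ 2 ≤
      12 * (ENNReal.ofReal (t ^ (-1 - 2 * (s + 1))) *
          eLpNorm (secondDiff (t • e) v) 2 volume ^ 2) +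
        108 * (ENNReal.ofReal (t ^ (-1 - 2 * s)) * eLpNorm (farPart t v) 2 volume ^ 2) +
        48 * (ENNReal.ofReal (t ^ (-1 - 2 * s)) * ENNReal.ofReal (min t t⁻¹ ^ 2) *
          moment 0 v) := by
    intro t ht
    rw [show -1 - 2 * (s + 1) = -1 - 2 * s + -2 by ring, Real.rpow_add ht,
      ENNReal.ofReal_mul (Real.rpow_nonneg ht.le _)]
    grw [eLpNorm_two_secondDiff_innerMul_sq_le ht ha he v]
    exact le_of_eq (by ring)
  rw [← lintegral_eLpNorm_secondDiff_sq (innerMul a v).integrable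
      ((innerMul a v).memLp 2 volume) hs,
    ← lintegral_eLpNorm_secondDiff_sq v.integrable (v.memLp 2 volume) (by linarith),
    ← lintegral_eLpNorm_farPart_sq hs (by fun_prop), lowerOrderConst,
    ← lintegral_mul_const' _ _ (moment_ne_top v le_rfl)]
  simp only [← lintegral_const_mul' _ _ (ENNReal.ofNat_ne_top)]
  have farPart_measurable := measurable_eLpNorm_two_farPart_sq (f := v) (by fun_prop)
  rw [← lintegral_add_right _ (by fun_prop), ← lintegral_add_right _ (by fun_prop)]
  exact setLIntegral_mono' measurableSet_Ioi weight_mul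

theorem moment_le_sum_lintegral {F ι : Type*} [NormedAddCommGroup F] [Fintype ι]
    (b : OrthonormalBasis ι ℝ E) {s : ℝ} (hs₀ : 0 < s) (hs₁ : s ≤ 1) {f : E → F}
    (hf : AEStronglyMeasurable f) :
    moment s f ≤
      ∑ i, ∫⁻ ξ, ENNReal.ofReal (|2 * Real.pi * inner ℝ (b i) ξ| ^ (2 * s)) * ‖f ξ‖ₑ ^ 2 := by
  have := hf.enorm
  rw [← lintegral_finsetSum' _ fun i _ => by fun_prop, moment]
  refine lintegral_mono fun ξ => ?_
  grw [ofReal_norm_rpow_le_sum b hs₀ hs₁ ξ, ← Finset.sum_mul]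
  gcongr ?_ * _
  refine Finset.sum_le_sum fun i _ => ?_
  rw [abs_mul, abs_of_pos Real.two_pi_pos]
  gcongr
  exact le_mul_of_one_le_left (abs_nonneg _) (by linarith [Real.pi_gt_three])

theorem lintegral_abs_two_pi_inner_rpow_le {F : Type*} [NormedAddCommGroup F] {s : ℝ} (hs : 0 ≤ s)
    {e : E} (he : ‖e‖ ≤ 1) (f : E → F) :
    ∫⁻ ξ, ENNReal.ofReal (|2 * Real.pi * inner ℝ e ξ| ^ (2 * s)) * ‖f ξ‖ₑ ^ 2 ≤
      ENNReal.ofReal ((2 * Real.pi) ^ (2 * s)) * moment s f := by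
  rw [ofReal_rpow_mul_moment (by positivity)]
  gcongr with ξ
  rw [abs_mul, abs_of_pos (by positivity)]
  gcongr
  exact (abs_real_inner_le_norm e ξ).trans (mul_le_of_le_one_left (norm_nonneg ξ) he)

theorem exists_lintegral_fourier_innerMul_le {s : ℝ} (hs₀ : 0 < s) (hs₁ : s < 1) :
    ∃ C : ℝ≥0, ∀ (a e : E), ‖a‖ ≤ 1 → ‖e‖ ≤ 1 → ∀ v : 𝓢(E, ℂ),
      ∫⁻ ξ, ENNReal.ofReal (|2 * Real.pi * inner ℝ e ξ| ^ (2 * s)) *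
          ‖𝓕 ⇑(innerMul a v) ξ‖ₑ ^ 2 ≤
        C * (moment (s + 1) (𝓕 ⇑v) + moment (s + 1) v + moment 0 v) := by
  let M : ℝ≥0∞ := 12 * (secondDiffConst (s + 1) * ENNReal.ofReal ((2 * Real.pi) ^ (2 * (s + 1)))) +
    108 * ENNReal.ofReal (2 * s)⁻¹ + 48 * lowerOrderConst s
  have diffConst_ne_top := secondDiffConst_ne_top hs₀ (by linarith)
  have const_ne_top : M / secondDiffConst s ≠ ⊤ := by
    have := secondDiffConst_ne_top (s := s + 1) (by linarith) (by linarith)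
    have := lowerOrderConst_ne_top hs₀ hs₁
    exact ENNReal.div_ne_top (by finiteness) (secondDiffConst_ne_zero s)
  refine ⟨(M / secondDiffConst s).toNNReal, fun a e ha he v => ?_⟩
  have split_bound (X Y Z : ℝ≥0∞) : 12 * (secondDiffConst (s + 1) *
      (ENNReal.ofReal ((2 * Real.pi) ^ (2 * (s + 1))) * X)) +
      108 * (ENNReal.ofReal (2 * s)⁻¹ * Y) + 48 * (lowerOrderConst s * Z) ≤ M * (X + Y + Z) := by
    simp only [M, add_mul, ← mul_assoc]
    gcongr
    exacts [le_add_right le_self_add, le_add_right le_add_self, le_add_self]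
  rw [ENNReal.coe_toNNReal const_ne_top, ← ENNReal.mul_div_right_comm,
    ENNReal.le_div_iff_mul_le (.inl (secondDiffConst_ne_zero s)) (.inl diffConst_ne_top), mul_comm]
  grw [secondDiffConst_mul_lintegral_fourier_innerMul_le hs₀ ha he v,
    lintegral_abs_two_pi_inner_rpow_le (by linarith) he, split_bound]

theorem exists_moment_fourier_innerMul_le {s : ℝ} (hs₀ : 0 < s) (hs₁ : s < 1) :
    ∃ C : ℝ≥0, ∀ a : E, ‖a‖ ≤ 1 → ∀ v : 𝓢(E, ℂ), moment s (𝓕 ⇑(innerMul a v)) ≤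
      C * (moment (s + 1) (𝓕 ⇑v) + moment (s + 1) v + moment 0 v) := by
  obtain ⟨C, hC⟩ := exists_lintegral_fourier_innerMul_le (E := E) hs₀ hs₁
  refine ⟨Module.finrank ℝ E * C, fun a ha v => ?_⟩
  let b := stdOrthonormalBasis ℝ E
  have fourier_measurable : AEStronglyMeasurable (𝓕 ⇑(innerMul a v)) :=
    (continuous_fourier_of_integrable (innerMul a v).integrable).aestronglyMeasurable
  calc moment s (𝓕 ⇑(innerMul a v))
      ≤ ∑ i, ∫⁻ ξ, ENNReal.ofReal (|2 * Real.pi * inner ℝ (b i) ξ| ^ (2 * s)) *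
          ‖𝓕 ⇑(innerMul a v) ξ‖ₑ ^ 2 := moment_le_sum_lintegral b hs₀ hs₁.le fourier_measurable
    _ ≤ ∑ _, C * (moment (s + 1) (𝓕 ⇑v) + moment (s + 1) v + moment 0 v) :=
        Finset.sum_le_sum fun i _ => hC a (b i) ha (b.norm_eq_one i).le v
    _ = _ := by simp [mul_assoc]

end FrequencyMoment

section Uncertainty

variable {E : Type*} [NormedAddCommGroup E] [InnerProductSpace ℝ E]

open scoped LineDeriv

theorem lineDerivOp_innerMul {e : E} (he : ‖e‖ = 1) (v : 𝓢(E, ℂ)) :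
    ∂_{e} (innerMul e v) = v + innerMul e (∂_{e} v) := by
  ext x
  have derivative := (innerSL ℝ e).hasFDerivAt (x := x) |>.smul (v.hasFDerivAt x)
  rw [add_apply, innerMul_apply, SchwartzMap.lineDerivOp_apply_eq_fderiv,
    SchwartzMap.lineDerivOp_apply_eq_fderiv, funext (innerMul_apply e v)]
  refine (congrArg (· e) derivative.fderiv).trans ?_
  simp [he, add_comm]

variable [FiniteDimensional ℝ E] [MeasurableSpace E] [BorelSpace E]

theorem integrable_norm_sq (v : 𝓢(E, ℂ)) : Integrable fun x => ‖v x‖ ^ 2 :=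
  (v.memLp 2 volume).integrable_norm_pow two_ne_zero

theorem integrable_inner (u w : 𝓢(E, ℂ)) : Integrable fun x => inner ℝ (u x) (w x) :=
  (SchwartzMap.bilinLeftCLM (innerSL ℝ) w.hasTemperateGrowth u).integrable

theorem integral_norm_sq_eq_neg_integral_inner {e : E} (he : ‖e‖ = 1) (v : 𝓢(E, ℂ)) :
    ∫ x, ‖v x‖ ^ 2 = -2 * ∫ x, inner ℝ (innerMul e v x) (∂_{e} v x) := by
  have by_parts : ∫ x, inner ℝ (innerMul e v x) (∂_{e} v x) =
      -∫ x, inner ℝ (∂_{e} (innerMul e v) x) (v x) :=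
    SchwartzMap.integral_bilinear_lineDerivOp_right_eq_neg_left (innerMul e v) v (innerSL ℝ) e
  have product_rule (x : E) : inner ℝ (∂_{e} (innerMul e v) x) (v x) =
      ‖v x‖ ^ 2 + inner ℝ (innerMul e v x) (∂_{e} v x) := by
    rw [lineDerivOp_innerMul he, add_apply, inner_add_left, real_inner_self_eq_norm_sq,
      innerMul_apply, innerMul_apply, real_inner_smul_left, real_inner_smul_left,
      real_inner_comm (v x)]
  simp_rw [product_rule] at by_parts
  rw [integral_add (integrable_norm_sq v) (integrable_inner _ _)] at by_parts
  linarith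

theorem integral_norm_sq_le_add_integral_norm_lineDerivOp_sq {e : E} (he : ‖e‖ = 1)
    (v : 𝓢(E, ℂ)) :
    ∫ x, ‖v x‖ ^ 2 ≤ (∫ x, ‖innerMul e v x‖ ^ 2) + ∫ x, ‖∂_{e} v x‖ ^ 2 := by
  rw [integral_norm_sq_eq_neg_integral_inner he, ← integral_const_mul,
    ← integral_add (integrable_norm_sq _) (integrable_norm_sq _)]
  refine integral_mono ((integrable_inner _ _).const_mul _)
    ((integrable_norm_sq _).add (integrable_norm_sq _)) fun x => ?_
  have expand := norm_add_sq_real (innerMul e v x) (∂_{e} v x)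
  linarith [sq_nonneg ‖innerMul e v x + ∂_{e} v x‖]

theorem moment_zero_eq_ofReal_integral (v : 𝓢(E, ℂ)) :
    moment 0 v = ENNReal.ofReal (∫ x, ‖v x‖ ^ 2) := by
  rw [ofReal_integral_eq_lintegral_ofReal (integrable_norm_sq v)
    (Filter.Eventually.of_forall fun x => sq_nonneg _), moment_zero]
  simp_rw [ENNReal.ofReal_pow (norm_nonneg _), ofReal_norm]

theorem moment_zero_innerMul_le {a : E} (ha : ‖a‖ ≤ 1) (v : 𝓢(E, ℂ)) :
    moment 0 (innerMul a v) ≤ moment 1 v := by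
  rw [moment_zero, moment]
  refine lintegral_mono fun x => ?_
  rw [innerMul_apply, enorm_smul, mul_pow, mul_one, Real.rpow_two,
    ENNReal.ofReal_pow (norm_nonneg _), ← ofReal_norm]
  gcongr
  exact (norm_inner_le_norm a x).trans (mul_le_of_le_one_left (norm_nonneg x) ha)

theorem moment_zero_lineDerivOp_le {e : E} (he : ‖e‖ ≤ 1) (v : 𝓢(E, ℂ)) :
    moment 0 ⇑(∂_{e} v : 𝓢(E, ℂ)) ≤ ENNReal.ofReal ((2 * Real.pi) ^ 2) * moment 1 (𝓕 ⇑v) := by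
  have fourier_eq : 𝓕 ⇑(∂_{e} v : 𝓢(E, ℂ)) = (2 * Real.pi * I) • ⇑(innerMul e (𝓕 v)) := by
    rw [← SchwartzMap.fourier_coe, SchwartzMap.fourier_lineDerivOp_eq, innerMul]
    simp_rw [real_inner_comm]
    rfl
  rw [← moment_zero_fourier, fourier_eq, moment_const_smul, ← SchwartzMap.fourier_coe]
  grw [moment_zero_innerMul_le he]
  apply le_of_eq
  congr 1
  rw [ENNReal.ofReal_pow (by positivity), ← ofReal_norm]
  simp [abs_of_pos Real.pi_pos]

theorem moment_zero_le_moment_one_add {e : E} (he : ‖e‖ = 1) (v : 𝓢(E, ℂ)) :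
    moment 0 v ≤ moment 1 v + ENNReal.ofReal ((2 * Real.pi) ^ 2) * moment 1 (𝓕 ⇑v) := by
  grw [← moment_zero_innerMul_le he.le, ← moment_zero_lineDerivOp_le he.le]
  simp_rw [moment_zero_eq_ofReal_integral]
  grw [integral_norm_sq_le_add_integral_norm_lineDerivOp_sq he v, ENNReal.ofReal_add_le]

theorem sq_le_add_rpow_mul {r ε k : ℝ} (hr : 0 ≤ r) (hε : 0 < ε) (hk : 1 ≤ k) :
    r ^ 2 ≤ ε + ε ^ (1 - k) * r ^ (2 * k) := by
  rcases le_total (r ^ 2) ε with hle | hle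
  · exact hle.trans (le_add_of_nonneg_right (by positivity))
  have r_sq_pos : 0 < r ^ 2 := hε.trans_le hle
  calc r ^ 2 = (r ^ 2) ^ (1 - k) * (r ^ 2) ^ k := by
        rw [← Real.rpow_add r_sq_pos, sub_add_cancel, Real.rpow_one]
    _ ≤ ε ^ (1 - k) * (r ^ 2) ^ k := by
        gcongr ?_ * _
        exact Real.rpow_le_rpow_of_nonpos hε hle (by linarith)
    _ ≤ ε + ε ^ (1 - k) * r ^ (2 * k) := by
        rw [← Real.rpow_natCast_mul hr, Nat.cast_ofNat]
        linarith

theorem moment_one_le_add_moment {F : Type*} [NormedAddCommGroup F] {f : E → F}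
    (hf : AEStronglyMeasurable f) {ε k : ℝ} (hε : 0 < ε) (hk : 1 ≤ k) :
    moment 1 f ≤ ENNReal.ofReal ε * moment 0 f + ENNReal.ofReal (ε ^ (1 - k)) * moment k f := by
  rw [moment_zero, moment, moment, ← lintegral_const_mul' _ _ ENNReal.ofReal_ne_top,
    ← lintegral_const_mul' _ _ ENNReal.ofReal_ne_top,
    ← lintegral_add_left' ((hf.enorm.pow_const 2).const_mul _)]
  refine lintegral_mono fun x => ?_
  rw [← mul_assoc, ← add_mul, ← ENNReal.ofReal_mul (by positivity),
    ← ENNReal.ofReal_add hε.le (by positivity), mul_one, Real.rpow_two]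
  gcongr
  exact sq_le_add_rpow_mul (norm_nonneg x) hε hk

theorem le_two_mul_of_le_half_add {x y : ℝ≥0∞} (hx : x ≠ ⊤) (h : x ≤ 2⁻¹ * x + y) :
    x ≤ 2 * y := by
  have halves : 2⁻¹ * x + 2⁻¹ * x ≤ 2⁻¹ * x + y := by
    rwa [← add_mul, ENNReal.inv_two_add_inv_two, one_mul]
  have half_le := ENNReal.le_of_add_le_add_left (by finiteness) halves
  calc x = 2 * (2⁻¹ * x) := by
        rw [← mul_assoc, ENNReal.mul_inv_cancel two_ne_zero ENNReal.ofNat_ne_top, one_mul]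
    _ ≤ 2 * y := by gcongr

theorem moment_zero_le_half_moment_zero_add [Nontrivial E] {k : ℝ} (hk : 1 ≤ k) (v : 𝓢(E, ℂ)) :
    moment 0 v ≤ 2⁻¹ * moment 0 v + ENNReal.ofReal ((1 + (2 * Real.pi) ^ 2) *
      (2 * (1 + (2 * Real.pi) ^ 2))⁻¹ ^ (1 - k)) * (moment k (𝓕 ⇑v) + moment k v) := by
  obtain ⟨e, he⟩ := exists_norm_eq E zero_le_one
  set K : ℝ := 1 + (2 * Real.pi) ^ 2
  set ε : ℝ := (2 * K)⁻¹
  have ε_pos : 0 < ε := by positivity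
  have ofReal_K : ENNReal.ofReal K = 1 + ENNReal.ofReal ((2 * Real.pi) ^ 2) := by
    rw [ENNReal.ofReal_add zero_le_one (by positivity), ENNReal.ofReal_one]
  have ofReal_K_mul_ε : ENNReal.ofReal K * ENNReal.ofReal ε = 2⁻¹ := by
    have K_mul_ε : K * ε = 2⁻¹ := by
      have : 0 < K := by positivity
      simp only [ε]
      field_simp
    rw [← ENNReal.ofReal_mul (by positivity), K_mul_ε, ENNReal.ofReal_inv_of_pos two_pos,
      ENNReal.ofReal_ofNat]
  have fourier_measurable : AEStronglyMeasurable (𝓕 ⇑v) :=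
    (continuous_fourier_of_integrable v.integrable).aestronglyMeasurable
  have position_bound := moment_one_le_add_moment v.continuous.aestronglyMeasurable ε_pos hk
  have frequency_bound := moment_one_le_add_moment fourier_measurable ε_pos hk
  rw [moment_zero_fourier] at frequency_bound
  rw [← ofReal_K_mul_ε, ENNReal.ofReal_mul (by positivity)]
  refine (moment_zero_le_moment_one_add he v).trans ?_
  grw [position_bound, frequency_bound, ofReal_K]
  calc _ = (1 + ENNReal.ofReal ((2 * Real.pi) ^ 2)) * ENNReal.ofReal ε * moment 0 v +
        (1 * ENNReal.ofReal (ε ^ (1 - k)) * moment k v +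
          ENNReal.ofReal ((2 * Real.pi) ^ 2) * ENNReal.ofReal (ε ^ (1 - k)) * moment k (𝓕 ⇑v)) := by
        ring
    _ ≤ _ := by
        rw [add_comm (moment k (𝓕 ⇑v)), mul_add _ (moment k v)]
        gcongr
        exacts [le_self_add, le_add_self]

theorem exists_moment_zero_le [Nontrivial E] {k : ℝ} (hk : 1 ≤ k) :
    ∃ C : ℝ≥0, ∀ v : 𝓢(E, ℂ), moment 0 v ≤ C * (moment k (𝓕 ⇑v) + moment k v) := by
  refine ⟨2 * ((1 + (2 * Real.pi) ^ 2) *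
    (2 * (1 + (2 * Real.pi) ^ 2))⁻¹ ^ (1 - k)).toNNReal, fun v => ?_⟩
  rw [ENNReal.coe_mul, ENNReal.coe_ofNat, mul_assoc]
  exact le_two_mul_of_le_half_add (moment_ne_top v le_rfl)
    (moment_zero_le_half_moment_zero_add hk v)

end Uncertainty

section Dilation

variable {E : Type*} [NormedAddCommGroup E] [InnerProductSpace ℝ E]

/-- The dilate `x ↦ v (c x)` of a Schwartz function. -/
def dilate (c : ℝˣ) (v : 𝓢(E, ℂ)) : 𝓢(E, ℂ) :=
  SchwartzMap.compCLMOfContinuousLinearEquiv ℂ (ContinuousLinearEquiv.smulLeft c) v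

theorem dilate_apply (c : ℝˣ) (v : 𝓢(E, ℂ)) (x : E) : dilate c v x = v ((c : ℝ) • x) := rfl

theorem innerMul_dilate (a : E) (c : ℝˣ) (v : 𝓢(E, ℂ)) :
    innerMul a (dilate c v) = (((c : ℝ)⁻¹ : ℝ) : ℂ) • dilate c (innerMul a v) := by
  ext x
  rw [smul_apply, innerMul_apply, dilate_apply, dilate_apply, innerMul_apply, real_inner_smul_right,
    coe_smul, smul_smul, inv_mul_cancel_left₀ c.ne_zero]

variable [FiniteDimensional ℝ E] [MeasurableSpace E] [BorelSpace E]

local notation "dim" => (Module.finrank ℝ E : ℝ)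

theorem lintegral_comp_smul (g : E → ℝ≥0∞) {c : ℝ} (hc : 0 < c) :
    ∫⁻ x, g (c • x) = ENNReal.ofReal (c ^ (-dim)) * ∫⁻ x, g x := by
  have map_smul := Measure.map_addHaar_smul (volume : Measure E) hc.ne'
  rw [abs_of_pos (by positivity), ← Real.rpow_natCast, ← Real.rpow_neg hc.le] at map_smul
  rw [← smul_eq_mul, ← lintegral_smul_measure, ← map_smul]
  exact (lintegral_map_equiv g (MeasurableEquiv.smul₀ c hc.ne')).symm

theorem moment_comp_smul {F : Type*} [NormedAddCommGroup F] (ℓ : ℝ) (f : E → F) {c : ℝ}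
    (hc : 0 < c) :
    moment ℓ (fun x => f (c • x)) = ENNReal.ofReal (c ^ (-dim - 2 * ℓ)) * moment ℓ f := by
  have weight_eq (x : E) : ‖x‖ ^ (2 * ℓ) = c ^ (-(2 * ℓ)) * ‖c • x‖ ^ (2 * ℓ) := by
    rw [norm_smul, Real.norm_of_nonneg hc.le, Real.mul_rpow hc.le (norm_nonneg x), ← mul_assoc,
      ← Real.rpow_add hc, neg_add_cancel, Real.rpow_zero, one_mul]
  have integrand_eq (x : E) : ENNReal.ofReal (‖x‖ ^ (2 * ℓ)) * ‖f (c • x)‖ₑ ^ 2 =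
      ENNReal.ofReal (c ^ (-(2 * ℓ))) *
        (ENNReal.ofReal (‖c • x‖ ^ (2 * ℓ)) * ‖f (c • x)‖ₑ ^ 2) := by
    rw [weight_eq x, ENNReal.ofReal_mul (by positivity), mul_assoc]
  rw [moment, lintegral_congr integrand_eq, lintegral_const_mul' _ _ ENNReal.ofReal_ne_top,
    lintegral_comp_smul (fun y => ENNReal.ofReal (‖y‖ ^ (2 * ℓ)) * ‖f y‖ₑ ^ 2) hc, ← mul_assoc,
    ← ENNReal.ofReal_mul (by positivity), ← Real.rpow_add hc, add_comm, ← sub_eq_add_neg, moment]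

theorem fourier_comp_smul {F : Type*} [NormedAddCommGroup F] [NormedSpace ℂ F] (f : E → F) {c : ℝ}
    (hc : 0 < c) :
    𝓕 (fun x => f (c • x)) = (c ^ (-dim)) • fun ξ => 𝓕 f (c⁻¹ • ξ) := by
  ext ξ
  rw [Pi.smul_apply, Real.fourier_eq, Real.fourier_eq, Real.rpow_neg hc.le, Real.rpow_natCast,
    ← Measure.integral_comp_smul_of_nonneg volume
    (fun y => Real.fourierChar (-inner ℝ y (c⁻¹ • ξ)) • f y) c (hR := hc.le)]
  simp_rw [real_inner_smul_left, real_inner_smul_right, mul_inv_cancel_left₀ hc.ne']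

theorem moment_fourier_comp_smul {F : Type*} [NormedAddCommGroup F] [NormedSpace ℂ F] (ℓ : ℝ)
    (f : E → F) {c : ℝ} (hc : 0 < c) :
    moment ℓ (𝓕 fun x => f (c • x)) = ENNReal.ofReal (c ^ (-dim + 2 * ℓ)) * moment ℓ (𝓕 f) := by
  rw [fourier_comp_smul f hc, moment_const_smul, moment_comp_smul ℓ _ (inv_pos.mpr hc), ← mul_assoc,
    Real.enorm_of_nonneg (by positivity), ← ENNReal.ofReal_pow (by positivity),
    ← ENNReal.ofReal_mul (by positivity), Real.inv_rpow hc.le, ← Real.rpow_neg hc.le,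
    ← Real.rpow_mul_natCast hc.le, ← Real.rpow_add hc]
  congr 3
  push_cast
  ring

theorem moment_fourier_innerMul_dilate (ℓ : ℝ) (a : E) (v : 𝓢(E, ℂ)) {c : ℝˣ} (hc : 0 < (c : ℝ)) :
    moment ℓ (𝓕 ⇑(innerMul a (dilate c v))) =
      ENNReal.ofReal (c ^ (-dim + 2 * ℓ - 2)) * moment ℓ (𝓕 ⇑(innerMul a v)) := by
  have fourier_eq : 𝓕 ⇑(innerMul a (dilate c v)) =
      (((c : ℝ)⁻¹ : ℝ) : ℂ) • 𝓕 fun x => innerMul a v ((c : ℝ) • x) := by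
    rw [innerMul_dilate]
    exact congrArg (fun f : 𝓢(E, ℂ) => ⇑f)
      (FourierTransform.fourier_smul (((c : ℝ)⁻¹ : ℝ) : ℂ) (dilate c (innerMul a v)))
  rw [fourier_eq, moment_const_smul, moment_fourier_comp_smul ℓ _ hc, ← mul_assoc,
    enorm_eq_nnnorm, nnnorm_real, ← enorm_eq_nnnorm, Real.enorm_of_nonneg (by positivity),
    ← ENNReal.ofReal_pow (by positivity), ← ENNReal.ofReal_mul (by positivity), inv_pow,
    ← Real.rpow_natCast, ← Real.rpow_neg hc.le, ← Real.rpow_add hc]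
  congr 3
  push_cast
  ring

theorem moment_fourier_innerMul_le_dilated {k : ℝ} {a : E} {C : ℝ≥0}
    (hC : ∀ v : 𝓢(E, ℂ), moment (k - 1) (𝓕 ⇑(innerMul a v)) ≤
      C * (moment k (𝓕 ⇑v) + moment k v)) (v : 𝓢(E, ℂ)) {c : ℝ} (hc : 0 < c) :
    moment (k - 1) (𝓕 ⇑(innerMul a v)) ≤
      C * (ENNReal.ofReal (c ^ 4) * moment k (𝓕 ⇑v) +
        ENNReal.ofReal ((c ^ 4) ^ (1 - k)) * moment k v) := by
  have dilated : ENNReal.ofReal (c ^ (-dim + 2 * (k - 1) - 2)) *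
      moment (k - 1) (𝓕 ⇑(innerMul a v)) ≤
      C * (ENNReal.ofReal (c ^ (-dim + 2 * k)) * moment k (𝓕 ⇑v) +
        ENNReal.ofReal (c ^ (-dim - 2 * k)) * moment k v) := by
    have bound := hC (dilate (Units.mk0 c hc.ne') v)
    rwa [moment_fourier_innerMul_dilate _ _ _ hc, funext (dilate_apply _ v), Units.val_mk0,
      moment_fourier_comp_smul _ _ hc, moment_comp_smul _ _ hc] at bound
  have ofReal_rpow_mul (p q : ℝ) :
      ENNReal.ofReal (c ^ p) * ENNReal.ofReal (c ^ q) = ENNReal.ofReal (c ^ (p + q)) := by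
    rw [← ENNReal.ofReal_mul (by positivity), ← Real.rpow_add hc]
  calc moment (k - 1) (𝓕 ⇑(innerMul a v))
      = ENNReal.ofReal (c ^ (dim + 4 - 2 * k)) *
          (ENNReal.ofReal (c ^ (-dim + 2 * (k - 1) - 2)) *
            moment (k - 1) (𝓕 ⇑(innerMul a v))) := by
        rw [← mul_assoc, ofReal_rpow_mul,
          show dim + 4 - 2 * k + (-dim + 2 * (k - 1) - 2) = 0 by ring,
          Real.rpow_zero, ENNReal.ofReal_one, one_mul]
    _ ≤ ENNReal.ofReal (c ^ (dim + 4 - 2 * k)) *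
          (C * (ENNReal.ofReal (c ^ (-dim + 2 * k)) * moment k (𝓕 ⇑v) +
            ENNReal.ofReal (c ^ (-dim - 2 * k)) * moment k v)) := by gcongr
    _ = C * (ENNReal.ofReal (c ^ 4) * moment k (𝓕 ⇑v) +
          ENNReal.ofReal ((c ^ 4) ^ (1 - k)) * moment k v) := by
        rw [mul_left_comm, mul_add, ← mul_assoc, ← mul_assoc, ofReal_rpow_mul, ofReal_rpow_mul,
          ← Real.rpow_natCast_mul hc.le, ← Real.rpow_natCast c 4]
        congr 5 <;> push_cast <;> ring_nf

end Dilation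

section Optimisation

theorem rpow_mul_eq_rpow_mul_rpow {b d : ℝ≥0} (hb : b ≠ 0) {k : ℝ} :
    (d / b) ^ (1 / k) * b = b ^ (1 - 1 / k) * d ^ (1 / k) := by
  rw [NNReal.div_rpow, NNReal.rpow_sub hb, NNReal.rpow_one]
  field_simp

theorem rpow_sub_one_mul_eq_rpow_mul_rpow {b d : ℝ≥0} (hb : b ≠ 0) (hd : d ≠ 0) {k : ℝ} :
    (d / b) ^ (1 / k - 1) * d = b ^ (1 - 1 / k) * d ^ (1 / k) := by
  rw [NNReal.rpow_sub (div_ne_zero hd hb), NNReal.rpow_one, ← rpow_mul_eq_rpow_mul_rpow hb]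
  field_simp

theorem le_two_mul_rpow_mul_rpow_of_ne_zero {A : ℝ≥0∞} {C b d : ℝ≥0} {k : ℝ} (hk : k ≠ 0)
    (hb : b ≠ 0) (hd : d ≠ 0)
    (h : ∀ c : ℝ, 0 < c →
      A ≤ C * (ENNReal.ofReal c * b + ENNReal.ofReal (c ^ (1 - k)) * d)) :
    A ≤ ↑(2 * C * (b ^ (1 - 1 / k) * d ^ (1 / k))) := by
  -- The optimal scale balances the two summands.
  let c : ℝ≥0 := (d / b) ^ (1 / k)
  have c_pos : 0 < c := NNReal.rpow_pos (by positivity)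
  have c_rpow : c ^ (1 - k) = (d / b) ^ (1 / k - 1) := by
    rw [← NNReal.rpow_mul]
    congr 1
    field_simp
  refine (h c c_pos).trans_eq ?_
  rw [← NNReal.coe_rpow, ENNReal.ofReal_coe_nnreal, ENNReal.ofReal_coe_nnreal, c_rpow]
  norm_cast
  rw [rpow_mul_eq_rpow_mul_rpow hb, rpow_sub_one_mul_eq_rpow_mul_rpow hb hd]
  ring

theorem le_two_mul_rpow_mul_rpow {A B D : ℝ≥0∞} {C : ℝ≥0} {k : ℝ} (hk : 1 < k) (hB : B ≠ ⊤)
    (hD : D ≠ ⊤)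
    (h : ∀ c : ℝ, 0 < c →
      A ≤ C * (ENNReal.ofReal c * B + ENNReal.ofReal (c ^ (1 - k)) * D)) :
    A ≤ 2 * C * (B ^ (1 - 1 / k) * D ^ (1 / k)) := by
  lift B to ℝ≥0 using hB
  lift D to ℝ≥0 using hD
  have one_sub_nonneg : 0 ≤ 1 - 1 / k := by
    rw [sub_nonneg, div_le_one (by linarith)]
    exact hk.le
  have perturbed (δ : ℝ≥0) (hδ : 0 < δ) :
      A ≤ ↑(2 * C * ((B + δ) ^ (1 - 1 / k) * (D + δ) ^ (1 / k))) := by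
    refine le_two_mul_rpow_mul_rpow_of_ne_zero (by linarith) (by positivity) (by positivity)
      fun c hc => (h c hc).trans ?_
    gcongr <;> exact le_self_add
  have continuous_bound : Continuous fun δ : ℝ≥0 =>
      ((2 * C * ((B + δ) ^ (1 - 1 / k) * (D + δ) ^ (1 / k)) : ℝ≥0) : ℝ≥0∞) := by
    have := NNReal.continuous_rpow_const one_sub_nonneg
    have := NNReal.continuous_rpow_const (y := 1 / k) (by positivity)
    fun_prop
  have limit := ge_of_tendsto (continuous_bound.tendsto 0 |>.mono_left nhdsWithin_le_nhds)
    (Filter.eventually_of_mem (U := Set.Ioi 0) self_mem_nhdsWithin perturbed)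
  simpa only [add_zero, ENNReal.coe_mul, ENNReal.coe_ofNat,
    ENNReal.coe_rpow_of_nonneg _ one_sub_nonneg,
    ENNReal.coe_rpow_of_nonneg _ (by positivity : 0 ≤ 1 / k)] using limit

end Optimisation

section Interpolation

variable {E : Type*} [NormedAddCommGroup E] [InnerProductSpace ℝ E] [FiniteDimensional ℝ E]
  [MeasurableSpace E] [BorelSpace E] [Nontrivial E]

theorem exists_moment_fourier_innerMul_le_add {k : ℝ} (hk₁ : 1 < k) (hk₂ : k < 2) :
    ∃ C : ℝ≥0, ∀ a : E, ‖a‖ ≤ 1 → ∀ v : 𝓢(E, ℂ), moment (k - 1) (𝓕 ⇑(innerMul a v)) ≤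
      C * (moment k (𝓕 ⇑v) + moment k v) := by
  obtain ⟨C₁, hC₁⟩ := exists_moment_fourier_innerMul_le (E := E) (s := k - 1) (by linarith)
    (by linarith)
  obtain ⟨C₂, hC₂⟩ := exists_moment_zero_le (E := E) hk₁.le
  refine ⟨C₁ * (1 + C₂), fun a ha v => (hC₁ a ha v).trans ?_⟩
  grw [sub_add_cancel, hC₂ v]
  push_cast
  exact le_of_eq (by ring)

theorem exists_moment_fourier_innerMul_le_rpow_mul_rpow {k : ℝ} (hk₁ : 1 < k) (hk₂ : k < 2) :
    ∃ C : ℝ≥0, ∀ a : E, ‖a‖ ≤ 1 → ∀ v : 𝓢(E, ℂ), moment (k - 1) (𝓕 ⇑(innerMul a v)) ≤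
      C * (moment k (𝓕 ⇑v) ^ (1 - 1 / k) * moment k v ^ (1 / k)) := by
  obtain ⟨C, hC⟩ := exists_moment_fourier_innerMul_le_add (E := E) hk₁ hk₂
  refine ⟨2 * C, fun a ha v => ?_⟩
  push_cast
  refine le_two_mul_rpow_mul_rpow hk₁ (moment_fourier_ne_top v (by linarith))
    (moment_ne_top v (by linarith)) fun c hc => ?_
  have fourth_root : (c ^ (1 / 4 : ℝ)) ^ 4 = c := by
    rw [← Real.rpow_mul_natCast hc.le]
    norm_num
  have dilated := moment_fourier_innerMul_le_dilated (hC a ha) v (c := c ^ (1 / 4 : ℝ))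
    (by positivity)
  rwa [fourth_root] at dilated

end Interpolation

section Coordinates

variable {n : ℕ}

theorem one_le_two_pi : 1 ≤ 2 * Real.pi := by
  linarith [Real.pi_gt_three]

theorem coord_mul_eq_innerMul (j : Fin n) (v : 𝓢(Vn n, ℂ)) :
    (fun y => (y j : ℂ) * v y) = innerMul (EuclideanSpace.single j 1) v := by
  ext y
  rw [innerMul_apply, EuclideanSpace.inner_single_left, map_one, one_mul, real_smul]

theorem eLpNorm_omMul_sq {ℓ : ℝ} (hℓ : 0 ≤ ℓ) (v : 𝓢(Vn n, ℂ)) :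
    eLpNorm (omMul n ℓ v) 2 volume ^ 2 =
      ENNReal.ofReal ((2 * Real.pi) ^ (2 * ℓ)) * moment ℓ (𝓕 ⇑v) := by
  rw [omMul, (isTemperedWeight_mul_norm_rpow Real.two_pi_pos.le hℓ).eLpNorm_multiplier_sq,
    ofReal_rpow_mul_moment Real.two_pi_pos.le]
  simp_rw [← Real.rpow_mul_natCast (mul_nonneg Real.two_pi_pos.le (norm_nonneg _)), Nat.cast_ofNat,
    mul_comm ℓ]

theorem rpow_half_sq {r : ℝ} (hr : 0 ≤ r) (ℓ : ℝ) : (r ^ (ℓ / 2)) ^ 2 = r ^ ℓ := by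
  rw [← Real.rpow_mul_natCast hr, Nat.cast_ofNat, div_mul_cancel₀ ℓ two_ne_zero]

theorem eLpNorm_japMul_sq {ℓ : ℝ} (hℓ : 0 ≤ ℓ) (v : 𝓢(Vn n, ℂ)) :
    eLpNorm (japMul n ℓ v) 2 volume ^ 2 =
      ∫⁻ ξ, ENNReal.ofReal ((1 + (2 * Real.pi * ‖ξ‖) ^ 2) ^ ℓ) * ‖𝓕 ⇑v ξ‖ₑ ^ 2 := by
  have half_nonneg : 0 ≤ ℓ / 2 := by positivity
  rw [japMul, (isTemperedWeight_one_add_sq_rpow _ half_nonneg).eLpNorm_multiplier_sq]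
  simp_rw [rpow_half_sq (add_nonneg zero_le_one (sq_nonneg _))]

theorem continuous_omMul {ℓ : ℝ} (hℓ : 0 ≤ ℓ) (v : 𝓢(Vn n, ℂ)) : Continuous (omMul n ℓ v) :=
  (isTemperedWeight_mul_norm_rpow Real.two_pi_pos.le hℓ).continuous_multiplier v

theorem continuous_japMul {ℓ : ℝ} (hℓ : 0 ≤ ℓ) (v : 𝓢(Vn n, ℂ)) : Continuous (japMul n ℓ v) :=
  (isTemperedWeight_one_add_sq_rpow _ (by positivity : 0 ≤ ℓ / 2)).continuous_multiplier v

theorem moment_fourier_le_eLpNorm_omMul_sq {k : ℝ} (hk : 0 ≤ k) (v : 𝓢(Vn n, ℂ)) :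
    moment k (𝓕 ⇑v) ≤ eLpNorm (omMul n k v) 2 volume ^ 2 := by
  rw [eLpNorm_omMul_sq hk]
  exact le_mul_of_one_le_left' (ENNReal.one_le_ofReal.mpr
    (Real.one_le_rpow one_le_two_pi (by positivity)))

theorem moment_fourier_le_eLpNorm_japMul_sq {k : ℝ} (hk : 0 ≤ k) (v : 𝓢(Vn n, ℂ)) :
    moment k (𝓕 ⇑v) ≤ eLpNorm (japMul n k v) 2 volume ^ 2 := by
  grw [moment_fourier_le_eLpNorm_omMul_sq hk, eLpNorm_omMul_sq hk, eLpNorm_japMul_sq hk,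
    ofReal_rpow_mul_moment_le Real.two_pi_pos.le hk le_rfl]

theorem moment_le_eLpNorm_one_add_sq_rpow_mul_sq {ℓ k : ℝ} (hℓ : 0 ≤ ℓ) (hℓk : ℓ ≤ k)
    (f : Vn n → ℂ) :
    moment ℓ f ≤
      eLpNorm (fun x => (((1 + ‖x‖ ^ 2) ^ (k / 2) : ℝ) : ℂ) * f x) 2 volume ^ 2 := by
  have bound := ofReal_rpow_mul_moment_le zero_le_one hℓ hℓk f
  simp_rw [Real.one_rpow, ENNReal.ofReal_one, one_mul] at bound
  simpa only [eLpNorm_two_ofReal_mul_sq, rpow_half_sq (add_nonneg zero_le_one (sq_nonneg _))]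
    using bound

theorem eLpNorm_japMul_innerMul_sq_le {s : ℝ} (hs₀ : 0 ≤ s) (hs₁ : s ≤ 1) {a : Vn n} (ha : ‖a‖ ≤ 1)
    (v : 𝓢(Vn n, ℂ)) :
    eLpNorm (japMul n s (innerMul a v)) 2 volume ^ 2 ≤
      moment 1 v + ENNReal.ofReal ((2 * Real.pi) ^ (2 * s)) * moment s (𝓕 ⇑(innerMul a v)) := by
  have measurable : AEStronglyMeasurable (𝓕 ⇑(innerMul a v)) :=
    (continuous_fourier_of_integrable (innerMul a v).integrable).aestronglyMeasurable
  grw [eLpNorm_japMul_sq hs₀,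
    lintegral_one_add_sq_rpow_mul_le Real.two_pi_pos.le hs₀ hs₁ measurable,
    moment_zero_fourier, moment_zero_innerMul_le ha]

theorem eLpNorm_toLp_sq {α ι : Type*} [MeasurableSpace α] {μ : Measure α} [Fintype ι]
    {f : ι → α → ℂ} (hf : ∀ j, AEStronglyMeasurable (f j) μ) :
    eLpNorm (fun x => (WithLp.equiv 2 (ι → ℂ)).symm fun j => f j x) 2 μ ^ 2 =
      ∑ j, eLpNorm (f j) 2 μ ^ 2 := by
  simp_rw [eLpNorm_two_sq_eq_lintegral]
  rw [← lintegral_finsetSum' _ fun j _ => (hf j).enorm.pow_const 2]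
  refine lintegral_congr fun x => ?_
  rw [← ofReal_norm, ← ENNReal.ofReal_pow (norm_nonneg _), EuclideanSpace.norm_sq_eq,
    ENNReal.ofReal_sum_of_nonneg fun _ _ => by positivity]
  simp_rw [ENNReal.ofReal_pow (norm_nonneg _), ofReal_norm]
  rfl

theorem eLpNorm_toLp_le {α ι : Type*} [MeasurableSpace α] {μ : Measure α} [Fintype ι]
    {f : ι → α → ℂ} (hf : ∀ j, AEStronglyMeasurable (f j) μ) {C : ℝ≥0} {b : ℝ≥0∞}
    (bound : ∀ j, eLpNorm (f j) 2 μ ^ 2 ≤ C * b ^ 2) :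
    eLpNorm (fun x => (WithLp.equiv 2 (ι → ℂ)).symm fun j => f j x) 2 μ ≤
      NNReal.sqrt (Fintype.card ι * C) * b := by
  rw [← ENNReal.pow_le_pow_left_iff two_ne_zero, eLpNorm_toLp_sq hf, mul_pow, ← ENNReal.coe_pow,
    NNReal.sq_sqrt]
  refine (Finset.sum_le_card_nsmul _ _ _ fun j _ => bound j).trans_eq ?_
  rw [Finset.card_univ, nsmul_eq_mul, ENNReal.coe_mul, ENNReal.coe_natCast, mul_assoc]

theorem VkNorm_le_of_eLpNorm_japMul_coord_mul_le {k : ℝ} {f : Vn n → ℂ} {C : ℝ≥0∞}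
    (h : eLpNorm (fun x : Vn n => (WithLp.equiv 2 (Fin n → ℂ)).symm
        (fun j => japMul n (k - 1) (fun y => (y j : ℂ) * f y) x)) 2 volume ≤
      C * (eLpNorm (japMul n k f) 2 volume +
        eLpNorm (fun x : Vn n => (((1 + ‖x‖ ^ 2) ^ (k / 2) : ℝ) : ℂ) * f x) 2 volume)) :
    VkNorm n k f ≤ (1 + 2 * C) * SigkNorm n k f := by
  refine sup_le ?_ (h.trans ?_)
  · calc _ ≤ SigkNorm n k f := le_sup_left
      _ ≤ _ := le_mul_of_one_le_left' le_self_add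
  · calc _ ≤ C * (SigkNorm n k f + SigkNorm n k f) := by
          gcongr
          exacts [le_sup_left, le_sup_right]
      _ = 2 * C * SigkNorm n k f := by ring
      _ ≤ _ := by
          gcongr
          exact le_add_self

end Coordinates

section MultiplierBounds

variable {n : ℕ} [NeZero n] {k : ℝ}

theorem exists_eLpNorm_japMul_innerMul_sq_le (hk₁ : 1 < k) (hk₂ : k < 2) :
    ∃ C : ℝ≥0, ∀ a : Vn n, ‖a‖ ≤ 1 → ∀ v : 𝓢(Vn n, ℂ),
      eLpNorm (japMul n (k - 1) (innerMul a v)) 2 volume ^ 2 ≤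
        C * (eLpNorm (japMul n k v) 2 volume +
          eLpNorm (fun x : Vn n => (((1 + ‖x‖ ^ 2) ^ (k / 2) : ℝ) : ℂ) * v x) 2 volume) ^ 2 := by
  obtain ⟨C, hC⟩ := exists_moment_fourier_innerMul_le_add (E := Vn n) hk₁ hk₂
  let K : ℝ≥0∞ := ENNReal.ofReal ((2 * Real.pi) ^ (2 * (k - 1)))
  refine ⟨1 + K.toNNReal * C, fun a ha v => ?_⟩
  set X := eLpNorm (japMul n k v) 2 volume
  set Y := eLpNorm (fun x : Vn n => (((1 + ‖x‖ ^ 2) ^ (k / 2) : ℝ) : ℂ) * v x) 2 volume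
  have frequency_bound : moment k (𝓕 ⇑v) ≤ X ^ 2 :=
    moment_fourier_le_eLpNorm_japMul_sq (by linarith) v
  have space_bound {ℓ : ℝ} (hℓ : 0 ≤ ℓ) (hℓk : ℓ ≤ k) : moment ℓ v ≤ Y ^ 2 :=
    moment_le_eLpNorm_one_add_sq_rpow_mul_sq hℓ hℓk v
  have sq_add_sq_le : X ^ 2 + Y ^ 2 ≤ (X + Y) ^ 2 := by
    rw [add_sq, add_right_comm]
    exact le_self_add
  calc _ ≤ moment 1 v + K * moment (k - 1) (𝓕 ⇑(innerMul a v)) :=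
        eLpNorm_japMul_innerMul_sq_le (by linarith) (by linarith) ha v
    _ ≤ Y ^ 2 + K * (C * (X ^ 2 + Y ^ 2)) := by
        grw [hC a ha v, frequency_bound, space_bound (by linarith) le_rfl,
          space_bound zero_le_one hk₁.le]
    _ ≤ (X + Y) ^ 2 + K * (C * (X + Y) ^ 2) := by
        gcongr
        exact le_add_self
    _ = _ := by
        rw [ENNReal.coe_add, ENNReal.coe_mul, ENNReal.coe_one,
          ENNReal.coe_toNNReal ENNReal.ofReal_ne_top]
        ring

theorem exists_eLpNorm_omMul_innerMul_sq_le (hk₁ : 1 < k) (hk₂ : k < 2) :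
    ∃ C : ℝ≥0, ∀ a : Vn n, ‖a‖ ≤ 1 → ∀ v : 𝓢(Vn n, ℂ),
      eLpNorm (omMul n (k - 1) (innerMul a v)) 2 volume ^ 2 ≤
        C * (eLpNorm (omMul n k v) 2 volume ^ (1 - 1 / k) *
          eLpNorm (fun x : Vn n => ((‖x‖ ^ k : ℝ) : ℂ) * v x) 2 volume ^ (1 / k)) ^ 2 := by
  obtain ⟨C, hC⟩ := exists_moment_fourier_innerMul_le_rpow_mul_rpow (E := Vn n) hk₁ hk₂
  refine ⟨((2 * Real.pi) ^ (2 * (k - 1))).toNNReal * C, fun a ha v => ?_⟩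
  have one_sub_nonneg : 0 ≤ 1 - 1 / k := by
    rw [sub_nonneg, div_le_one (by linarith)]
    exact hk₁.le
  have rpow_sq (X : ℝ≥0∞) (p : ℝ) : (X ^ p) ^ 2 = (X ^ 2) ^ p := by
    rw [← ENNReal.rpow_mul_natCast, ← ENNReal.rpow_natCast_mul, mul_comm]
  rw [eLpNorm_omMul_sq (by linarith), mul_pow, rpow_sq, rpow_sq, eLpNorm_two_norm_rpow_mul_sq,
    ENNReal.coe_mul, mul_assoc]
  grw [hC a ha v, ← moment_fourier_le_eLpNorm_omMul_sq (by linarith) v]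
  exact le_rfl

theorem exists_eLpNorm_japMul_coord_mul_le (hk₁ : 1 < k) (hk₂ : k < 2) :
    ∃ C : ℝ≥0, ∀ v : 𝓢(Vn n, ℂ),
      eLpNorm (fun x : Vn n => (WithLp.equiv 2 (Fin n → ℂ)).symm
          (fun j => japMul n (k - 1) (fun y => (y j : ℂ) * v y) x)) 2 volume ≤
        C * (eLpNorm (japMul n k v) 2 volume +
          eLpNorm (fun x : Vn n => (((1 + ‖x‖ ^ 2) ^ (k / 2) : ℝ) : ℂ) * v x) 2 volume) := by
  obtain ⟨C, hC⟩ := exists_eLpNorm_japMul_innerMul_sq_le (n := n) hk₁ hk₂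
  refine ⟨NNReal.sqrt (Fintype.card (Fin n) * C), fun v => ?_⟩
  simp_rw [coord_mul_eq_innerMul]
  exact eLpNorm_toLp_le (fun j => (continuous_japMul (by linarith) _).aestronglyMeasurable)
    fun j => hC _ (by simp) v

theorem exists_eLpNorm_omMul_coord_mul_le (hk₁ : 1 < k) (hk₂ : k < 2) :
    ∃ C : ℝ≥0, ∀ v : 𝓢(Vn n, ℂ),
      eLpNorm (fun x : Vn n => (WithLp.equiv 2 (Fin n → ℂ)).symm
          (fun j => omMul n (k - 1) (fun y => (y j : ℂ) * v y) x)) 2 volume ≤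
        C * (eLpNorm (omMul n k v) 2 volume ^ (1 - 1 / k) *
          eLpNorm (fun x : Vn n => ((‖x‖ ^ k : ℝ) : ℂ) * v x) 2 volume ^ (1 / k)) := by
  obtain ⟨C, hC⟩ := exists_eLpNorm_omMul_innerMul_sq_le (n := n) hk₁ hk₂
  refine ⟨NNReal.sqrt (Fintype.card (Fin n) * C), fun v => ?_⟩
  simp_rw [coord_mul_eq_innerMul]
  exact eLpNorm_toLp_le (fun j => (continuous_omMul (by linarith) _).aestronglyMeasurable)
    fun j => hC _ (by simp) v

end MultiplierBounds

/-- Lemma A.1: for `n ≥ 1`, `1 < k < 2` there is `C` such that for all Schwartz `v`: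
`‖⟨ω⟩^{k−1} x v‖₂ ≤ C(‖⟨ω⟩^k v‖₂ + ‖⟨x⟩^k v‖₂)`; equivalently
`‖ω^{k−1} x v‖₂ ≤ C ‖ω^k v‖₂^{1−1/k} ‖|x|^k v‖₂^{1/k}`; in particular `Σ^k ⊂ V^k` with
`‖v;V^k‖ ≤ C ‖v;Σ^k‖`. -/
theorem stmt_7 (n : ℕ) (hn : 1 ≤ n) (k : ℝ) (hk1 : 1 < k) (hk2 : k < 2) :
    ∃ C : ℝ, 0 < C ∧ ∀ v : SchwartzMap (Vn n) ℂ,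
      (eLpNorm (fun x : Vn n => (WithLp.equiv 2 (Fin n → ℂ)).symm
          (fun j => japMul n (k - 1) (fun y => (y j : ℂ) * v y) x)) 2 volume
        ≤ ENNReal.ofReal C *
          (eLpNorm (japMul n k (fun y => v y)) 2 volume
            + eLpNorm (fun x : Vn n => (((1 + ‖x‖ ^ 2) ^ (k / 2) : ℝ) : ℂ) * v x) 2 volume))
      ∧ (eLpNorm (fun x : Vn n => (WithLp.equiv 2 (Fin n → ℂ)).symm
          (fun j => omMul n (k - 1) (fun y => (y j : ℂ) * v y) x)) 2 volume
        ≤ ENNReal.ofReal C *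
          (eLpNorm (omMul n k (fun y => v y)) 2 volume) ^ (1 - 1 / k) *
          (eLpNorm (fun x : Vn n => ((‖x‖ ^ k : ℝ) : ℂ) * v x) 2 volume) ^ (1 / k))
      ∧ VkNorm n k (fun y => v y) ≤ ENNReal.ofReal C * SigkNorm n k (fun y => v y) := by
  have : NeZero n := ⟨by omega⟩
  obtain ⟨C₁, weighted_bound⟩ := exists_eLpNorm_japMul_coord_mul_le (n := n) hk1 hk2
  obtain ⟨C₂, interpolation_bound⟩ := exists_eLpNorm_omMul_coord_mul_le (n := n) hk1 hk2
  let C : ℝ≥0 := 1 + 2 * C₁ + C₂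
  have C₁_le : C₁ ≤ C := by
    rw [← NNReal.coe_le_coe]
    push_cast [C]
    linarith [C₁.coe_nonneg, C₂.coe_nonneg]
  refine ⟨C, by positivity, fun v => ?_⟩
  rw [ENNReal.ofReal_coe_nnreal]
  refine ⟨(weighted_bound v).trans ?_, (interpolation_bound v).trans ?_,
    (VkNorm_le_of_eLpNorm_japMul_coord_mul_le (weighted_bound v)).trans ?_⟩
  · gcongr
  · rw [mul_assoc]
    gcongr
    exact le_add_self
  · gcongr
    exact_mod_cast le_self_add
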